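/- arXiv:1509.03460 — 2 statements merged into one kernel-verified Lean document; each statement's English description precedes it below -/
import Mathlib

section
/- Let Γ be a finite-dimensional algebra of global dimension at most 2 admitting a tilting module Y (projective dimension ≤ 1, Ext¹(Y,Y)=0, and number of non-isomorphic indecomposable summands equal to the number of simple Γ-modules) which is generated and cogenerated by a projective-injective module. Then Γ has dominant dimension at least 2. -/
open CategoryTheory Limits

universe u

variable {K Γ : Type u} [Field K] [Ring Γ] [Algebra K Γ]

/-- The setoid of isomorphism on a class of modules, used to count isomorphism classes. -/
def modIsoSetoid (P : ModuleCat.{u} Γ → Prop) : Setoid {M : ModuleCat.{u} Γ // P M} :=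
  ⟨fun X Y => Nonempty (X.1 ≅ Y.1),
    ⟨fun _ => ⟨Iso.refl _⟩, fun ⟨h⟩ => ⟨h.symm⟩, fun ⟨h⟩ ⟨h'⟩ => ⟨h ≪≫ h'⟩⟩⟩

/-- The type of isomorphism classes of modules satisfying a property `P`. -/
def ModIsoClasses (P : ModuleCat.{u} Γ → Prop) : Type (u + 1) :=
  Quotient (modIsoSetoid P)

/-- An object is indecomposable if it is non-zero and not a biproduct of two
non-zero objects. -/
def IsIndecomposableMod (X : ModuleCat.{u} Γ) : Prop :=
  ¬ IsZero X ∧ ∀ (Y Z : ModuleCat.{u} Γ), Nonempty (X ≅ Y ⊞ Z) → IsZero Y ∨ IsZero Z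

/-- `Z` is a direct summand of `Y`. -/
def IsSummand (Z Y : ModuleCat.{u} Γ) : Prop :=
  ∃ (ι : Z ⟶ Y) (ρ : Y ⟶ Z), ι ≫ ρ = 𝟙 Z

/-!
Let `Z` be an indecomposable summand of `Y` that is not projective, `g : Q₀ → Z` a surjection from
a projective-injective module and `j : Z → Q₁` an embedding into another one. The kernel of `g` is
projective, as `Z` has projective dimension at most one, but not injective, so it has an
indecomposable non-injective summand `N`. Splitting `Q₀` along an injective hull `E` of `N` splits
`Z` as well, hence `E / N ≅ Z` by indecomposability: `Z` is the cosyzygy of `N`, and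
`0 → N → E → Q₁` shows that `N` has dominant dimension at least two. (A projective `Z` is
injective, and one takes `N = Z`.)

Now `N` determines `Z`, and the simple top of `N` determines `N`. So the summands of `Y` embed into
the simple modules up to isomorphism, and as both are finite and equally numerous, every
indecomposable projective module occurs as some `N`.
-/

universe v

section InjectiveModules

variable {R : Type u} [Ring R] {M N : Type v} [AddCommGroup M] [Module R M] [AddCommGroup N]
  [Module R N]

theorem moduleInjective_of_leftInverse [Module.Injective R M] {i : N →ₗ[R] M} {r : M →ₗ[R] N}
    (h : Function.LeftInverse r i) : Module.Injective R N where
  out _ _ _ _ _ _ f hf g := by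
    obtain ⟨k, hk⟩ := Module.Injective.out f hf (i ∘ₗ g)
    exact ⟨r ∘ₗ k, fun x => by simp only [LinearMap.comp_apply, hk, h (g x)]⟩

theorem moduleInjective_of_linearEquiv [Module.Injective R M] (e : M ≃ₗ[R] N) :
    Module.Injective R N :=
  moduleInjective_of_leftInverse (i := e.symm.toLinearMap) (r := e.toLinearMap) e.apply_symm_apply

theorem moduleInjective_of_isCompl [Module.Injective R M] {p q : Submodule R M}
    (h : IsCompl p q) : Module.Injective R p :=
  moduleInjective_of_leftInverse (i := p.subtype) (Submodule.projectionOnto_apply_left h)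

theorem moduleInjective_prod [Module.Injective R M] [Module.Injective R N] :
    Module.Injective R (M × N) where
  out _ _ _ _ _ _ f hf g := by
    obtain ⟨a, ha⟩ := Module.Injective.out f hf (LinearMap.fst R M N ∘ₗ g)
    obtain ⟨b, hb⟩ := Module.Injective.out f hf (LinearMap.snd R M N ∘ₗ g)
    exact ⟨a.prod b, fun x => Prod.ext (ha x) (hb x)⟩

theorem moduleInjective_of_subsingleton [Subsingleton M] : Module.Injective R M :=
  ⟨fun _ _ _ _ _ _ _ _ _ => ⟨0, fun _ => Subsingleton.elim _ _⟩⟩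

theorem isComplemented_of_moduleInjective (p : Submodule R M) [Module.Injective R p] :
    IsComplemented p := by
  obtain ⟨r, hr⟩ := Module.Injective.out p.subtype p.injective_subtype LinearMap.id
  exact ⟨_, LinearMap.isCompl_of_proj hr⟩

theorem moduleProjective_of_isCompl [Module.Projective R M] {p q : Submodule R M}
    (h : IsCompl p q) : Module.Projective R p :=
  .of_split p.subtype (p.projectionOnto q h) (LinearMap.ext (Submodule.projectionOnto_apply_left h))

end InjectiveModules

section Indecomposable

variable {R : Type u} [Ring R] {M N : Type*} [AddCommGroup M] [Module R M] [AddCommGroup N]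
  [Module R N]

/-- Indecomposability of an unbundled module, in terms of its lattice of submodules. -/
structure IsIndecomposable (R : Type u) (M : Type*) [Ring R] [AddCommGroup M] [Module R M] :
    Prop where
  nontrivial : Nontrivial M
  eq_bot_or_eq_bot {p q : Submodule R M} : IsCompl p q → p = ⊥ ∨ q = ⊥

theorem IsIndecomposable.of_linearEquiv (hM : IsIndecomposable R M) (e : M ≃ₗ[R] N) :
    IsIndecomposable R N where
  nontrivial := have := hM.nontrivial; e.symm.toEquiv.nontrivial
  eq_bot_or_eq_bot h := by
    simpa only [map_eq_bot_iff] using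
      hM.eq_bot_or_eq_bot ((Submodule.orderIsoMapComap e.symm).isCompl h)

theorem isCompl_range_ker_of_leftInverse {i : N →ₗ[R] M} {r : M →ₗ[R] N}
    (h : Function.LeftInverse r i) : IsCompl (LinearMap.range i) (LinearMap.ker r) := by
  have hir : IsIdempotentElem (i ∘ₗ r) := LinearMap.ext fun x => congrArg i (h (r x))
  have hrange : LinearMap.range (i ∘ₗ r) = LinearMap.range i :=
    LinearMap.range_comp_of_range_eq_top i (LinearMap.range_eq_top.2 h.surjective)
  have hker : LinearMap.ker (i ∘ₗ r) = LinearMap.ker r :=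
    LinearMap.ker_comp_of_ker_eq_bot r (LinearMap.ker_eq_bot.2 h.injective)
  exact hrange ▸ hker ▸ LinearMap.IsIdempotentElem.isCompl hir

theorem IsIndecomposable.nonempty_linearEquiv_of_leftInverse [Nontrivial N]
    (hM : IsIndecomposable R M) {i : N →ₗ[R] M} {r : M →ₗ[R] N} (h : Function.LeftInverse r i) :
    Nonempty (N ≃ₗ[R] M) := by
  have hcompl := isCompl_range_ker_of_leftInverse h
  have hne : LinearMap.range i ≠ ⊥ := fun h₀ => by
    obtain ⟨x, hx⟩ := exists_ne (0 : N)
    exact hx (h.injective (by rw [LinearMap.range_eq_bot.1 h₀]; rfl))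
  have htop : LinearMap.range i = ⊤ := by
    simpa only [(hM.eq_bot_or_eq_bot hcompl).resolve_left hne, sup_bot_eq] using hcompl.sup_eq_top
  exact ⟨.ofBijective i ⟨h.injective, LinearMap.range_eq_top.1 htop⟩⟩

-- Fitting's lemma: `f` is nilpotent or bijective, and it is not nilpotent since `p ∘ f ^ n = p`.
theorem IsIndecomposable.bijective_of_comp_eq {S : Type*} [AddCommGroup S] [Module R S]
    [IsArtinian R M] [IsNoetherian R M] (hM : IsIndecomposable R M) {f : M →ₗ[R] M}
    {p : M →ₗ[R] S} (hp : p ≠ 0) (hf : p ∘ₗ f = p) : Function.Bijective f := by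
  have hpow (n : ℕ) : p ∘ₗ (f ^ n) = p := by
    induction n with
    | zero => rfl
    | succ n ih => rw [pow_succ', Module.End.mul_eq_comp, ← LinearMap.comp_assoc, hf, ih]
  obtain ⟨n, hn, hcompl⟩ :=
    ((Filter.eventually_ge_atTop 1).and (LinearMap.eventually_isCompl_ker_pow_range_pow f)).exists
  have hker : LinearMap.ker (f ^ n) = ⊥ := by
    refine (hM.eq_bot_or_eq_bot hcompl).resolve_right fun h => hp ?_
    rw [← hpow n, LinearMap.range_eq_bot.1 h, LinearMap.comp_zero]
  refine IsArtinian.bijective_of_injective_endomorphism f (LinearMap.ker_eq_bot.1 ?_)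
  obtain ⟨m, rfl⟩ := Nat.exists_eq_add_of_le' hn
  rw [pow_succ] at hker
  exact eq_bot_mono (LinearMap.ker_le_ker_comp f (f ^ m)) hker

theorem IsIndecomposable.exists_leftInverse_of_projective {S : Type*} [AddCommGroup S] [Module R S]
    [Nontrivial S] [IsArtinian R M] [IsNoetherian R M] [Module.Projective R M]
    [Module.Projective R N] (hM : IsIndecomposable R M) {a : M →ₗ[R] S} {b : N →ₗ[R] S}
    (ha : Function.Surjective a) (hb : Function.Surjective b) :
    ∃ (i : M →ₗ[R] N) (r : N →ₗ[R] M), Function.LeftInverse r i := by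
  obtain ⟨i, hi⟩ := Module.projective_lifting_property b a hb
  obtain ⟨r, hr⟩ := Module.projective_lifting_property a b ha
  have ha₀ : a ≠ 0 := by
    rintro rfl
    obtain ⟨y, hy⟩ := exists_ne (0 : S)
    obtain ⟨x, rfl⟩ := ha y
    exact hy rfl
  let e := LinearEquiv.ofBijective (r ∘ₗ i)
    (hM.bijective_of_comp_eq ha₀ (by rw [← LinearMap.comp_assoc, hr, hi]))
  exact ⟨i, e.symm.toLinearMap ∘ₗ r, e.symm_apply_apply⟩

end Indecomposable

section ComplementedSubmodules

variable {R : Type u} [Ring R] {M : Type v} [AddCommGroup M] [Module R M]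

theorem disjoint_map_subtype_and_sup_eq {N : Submodule R M} {p q : Submodule R N}
    (h : IsCompl p q) :
    Disjoint (p.map N.subtype) (q.map N.subtype) ∧ p.map N.subtype ⊔ q.map N.subtype = N :=
  ⟨Submodule.disjoint_map N.injective_subtype h.disjoint,
    by rw [← Submodule.map_sup, h.sup_eq_top, Submodule.map_subtype_top]⟩

theorem exists_disjoint_sup_eq_of_not_isIndecomposable {N : Submodule R M} (hN : N ≠ ⊥)
    (hdec : ¬ IsIndecomposable R N) :
    ∃ A B : Submodule R M, A ≠ ⊥ ∧ B ≠ ⊥ ∧ Disjoint A B ∧ A ⊔ B = N := by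
  obtain ⟨p, q, hpq, hp, hq⟩ : ∃ p q : Submodule R N, IsCompl p q ∧ p ≠ ⊥ ∧ q ≠ ⊥ := by
    contrapose! hdec
    exact ⟨Submodule.nontrivial_iff_ne_bot.2 hN,
      fun {p q} hpq => or_iff_not_imp_left.2 (hdec p q hpq)⟩
  have hmap {p : Submodule R N} (hp : p ≠ ⊥) : p.map N.subtype ≠ ⊥ :=
    (Submodule.map_injective_of_injective N.injective_subtype).ne_iff' (Submodule.map_bot _) |>.2 hp
  exact ⟨_, _, hmap hp, hmap hq, disjoint_map_subtype_and_sup_eq hpq⟩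

theorem isComplemented_of_disjoint_sup {A B : Submodule R M} (hAB : Disjoint A B)
    (h : IsComplemented (A ⊔ B)) : IsComplemented A :=
  h.elim fun C hC => ⟨B ⊔ C, hAB.isCompl_sup_right_of_isCompl_sup_left hC⟩

theorem isComplemented_induction [IsArtinian R M] {motive : Submodule R M → Prop}
    (bot : motive ⊥)
    (indecomposable : ∀ N : Submodule R M, IsComplemented N → IsIndecomposable R N → motive N)
    (sup : ∀ A B : Submodule R M, Disjoint A B → motive A → motive B → motive (A ⊔ B))
    {N : Submodule R M} (hN : IsComplemented N) : motive N := by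
  induction N using WellFoundedLT.induction with
  | ind N ih =>
    by_cases hbot : N = ⊥
    · exact hbot ▸ bot
    by_cases hdec : IsIndecomposable R N
    · exact indecomposable N hN hdec
    obtain ⟨A, B, hA, hB, hAB, rfl⟩ := exists_disjoint_sup_eq_of_not_isIndecomposable hbot hdec
    have hlt {A B : Submodule R M} (hAB : Disjoint A B) (hB : B ≠ ⊥) : A < A ⊔ B :=
      left_lt_sup.2 fun hle => hB (hAB.symm.eq_bot_of_le hle)
    refine sup A B hAB (ih A (hlt hAB hB) (isComplemented_of_disjoint_sup hAB hN)) (ih B ?_ ?_)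
    · exact sup_comm A B ▸ hlt hAB.symm hA
    · exact isComplemented_of_disjoint_sup hAB.symm (sup_comm A B ▸ hN)

theorem injective_coprod_subtype {A B : Submodule R M} (h : Disjoint A B) :
    Function.Injective (A.subtype.coprod B.subtype) := by
  rw [← LinearMap.ker_eq_bot, LinearMap.ker_coprod_of_disjoint_range _ _
    (by rwa [A.range_subtype, B.range_subtype]), A.ker_subtype, B.ker_subtype, Submodule.prod_bot]

theorem nonempty_linearEquiv_sup {A B : Submodule R M} (h : Disjoint A B) :
    Nonempty ((A × B) ≃ₗ[R] ↥(A ⊔ B)) := by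
  have hrange : LinearMap.range (A.subtype.coprod B.subtype) = A ⊔ B := by
    rw [LinearMap.range_coprod, A.range_subtype, B.range_subtype]
  exact ⟨(LinearEquiv.ofInjective _ (injective_coprod_subtype h)).trans (.ofEq _ _ hrange)⟩

end ComplementedSubmodules

section SimpleModules

variable (R : Type u) [Ring R]

theorem exists_isCoatom_submodule [IsSemiprimaryRing R] (M : Type v) [AddCommGroup M] [Module R M]
    [Nontrivial M] : ∃ m : Submodule R M, IsCoatom m := by
  refine IsSemiprimaryRing.induction ℤ R M
    (P := fun M _ _ _ => Nontrivial M → ∃ m : Submodule R M, IsCoatom m) ?_ ?_ ‹_›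
  · intro M _ _ _ _ _ _ _
    exact IsCoatomic.exists_coatom _
  · intro M _ _ _ _ N hN hquot _
    by_cases htop : N = ⊤
    · have e : N ≃ₗ[R] M := .ofTop N htop
      obtain ⟨m, hm⟩ := hN e.toEquiv.nontrivial
      exact ⟨_, (Submodule.isCoatom_comap_iff e.symm.surjective).2 hm⟩
    · obtain ⟨m, hm⟩ := hquot (Submodule.Quotient.nontrivial_iff.2 htop)
      exact ⟨_, (Submodule.isCoatom_comap_iff N.mkQ_surjective).2 hm⟩

variable {R}

theorem exists_finite_simple_of_isFiniteLength {M : Type u} [AddCommGroup M] [Module R M]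
    (hM : IsFiniteLength R M) :
    ∃ s : Set (ModuleCat.{u} R), s.Finite ∧ ∀ (S : Type u) [AddCommGroup S] [Module R S]
      [IsSimpleModule R S] (f : M →ₗ[R] S), f ≠ 0 → ∃ T ∈ s, Nonempty (T ≃ₗ[R] S) := by
  induction hM with
  | of_subsingleton =>
    exact ⟨∅, Set.finite_empty, fun S _ _ _ f hf => absurd (Subsingleton.elim f 0) hf⟩
  | @of_simple_quotient M _ _ N _ _ ih =>
    obtain ⟨s, hs, hsimple⟩ := ih
    refine ⟨insert (ModuleCat.of R (M ⧸ N)) s, hs.insert _, fun S _ _ _ f hf => ?_⟩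
    by_cases hfN : f ∘ₗ N.subtype = 0
    · have hle : N ≤ LinearMap.ker f := fun x hx => LinearMap.congr_fun hfN ⟨x, hx⟩
      have hlift : N.liftQ f hle ≠ 0 := fun h => hf (by rw [← N.liftQ_mkQ f hle, h]; rfl)
      exact ⟨_, Set.mem_insert _ _, ⟨.ofBijective _ (LinearMap.bijective_of_ne_zero hlift)⟩⟩
    · obtain ⟨T, hT, e⟩ := hsimple S (f ∘ₗ N.subtype) hfN
      exact ⟨T, Set.mem_insert_of_mem _ hT, e⟩

theorem exists_linearMap_ne_zero (R : Type u) [Ring R] (M : Type v) [AddCommGroup M] [Module R M]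
    [Nontrivial M] : ∃ f : R →ₗ[R] M, f ≠ 0 := by
  obtain ⟨x, hx⟩ := exists_ne (0 : M)
  exact ⟨LinearMap.toSpanSingleton R M x, fun h => hx (by simpa using LinearMap.congr_fun h 1)⟩

theorem finite_modIsoClasses_simple (R : Type u) [Ring R] [IsArtinianRing R] :
    Finite (ModIsoClasses fun S : ModuleCat.{u} R => Simple S) := by
  obtain ⟨s, hs, hsimple⟩ := exists_finite_simple_of_isFiniteLength (R := R) (M := R)
    (isFiniteLength_iff_isNoetherian_isArtinian.2 ⟨inferInstance, inferInstance⟩)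
  have : Finite {T : ModuleCat.{u} R // T ∈ s ∧ Simple T} := hs.subset fun T hT => hT.1
  refine .of_surjective (fun T : {T : ModuleCat.{u} R // T ∈ s ∧ Simple T} =>
    Quotient.mk (modIsoSetoid _) ⟨T.1, T.2.2⟩) fun S => ?_
  induction S using Quotient.ind with | _ S
  obtain ⟨S, hS⟩ := S
  have := (simple_iff_isSimpleModule' S).1 hS
  have := IsSimpleModule.nontrivial R S
  obtain ⟨f, hf⟩ := exists_linearMap_ne_zero R S
  obtain ⟨T, hT, ⟨e⟩⟩ := hsimple S f hf
  exact ⟨⟨T, hT, Simple.of_iso e.toModuleIso⟩, Quotient.sound ⟨e.toModuleIso⟩⟩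

end SimpleModules

section IndecomposableProjectives

variable {R : Type u} [Ring R] [IsArtinianRing R]

theorem exists_isIndecomposable_leftIdeal_surjective (S : Type v) [AddCommGroup S] [Module R S]
    [IsSimpleModule R S] :
    ∃ (L : Submodule R R) (f : L →ₗ[R] S), IsComplemented L ∧ IsIndecomposable R L ∧
      Function.Surjective f := by
  have := IsSimpleModule.nontrivial R S
  obtain ⟨f, hf⟩ := exists_linearMap_ne_zero R S
  by_contra! h
  refine hf (LinearMap.ker_eq_top.1 (top_unique ?_))
  refine isComplemented_induction (motive := (· ≤ LinearMap.ker f)) bot_le (fun N hN hdec => ?_)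
    (fun A B _ hA hB => sup_le hA hB) isComplemented_top
  have hzero : f ∘ₗ N.subtype = 0 := by
    by_contra hne
    exact h N _ hN hdec (LinearMap.surjective_of_ne_zero hne)
  exact fun x hx => LinearMap.congr_fun hzero ⟨x, hx⟩

theorem IsIndecomposable.nonempty_linearEquiv_of_simple_quotient {P P' S : Type v}
    [AddCommGroup P] [Module R P] [AddCommGroup P'] [Module R P'] [AddCommGroup S] [Module R S]
    [IsSimpleModule R S] [Module.Projective R P] [Module.Projective R P']
    (hP : IsIndecomposable R P) (hP' : IsIndecomposable R P') {a : P →ₗ[R] S} {a' : P' →ₗ[R] S}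
    (ha : Function.Surjective a) (ha' : Function.Surjective a') : Nonempty (P ≃ₗ[R] P') := by
  obtain ⟨L, f, ⟨C, hC⟩, hL, hf⟩ := exists_isIndecomposable_leftIdeal_surjective (R := R) S
  have := moduleProjective_of_isCompl hC
  have := hL.nontrivial
  have := IsSimpleModule.nontrivial R S
  obtain ⟨i, r, h⟩ := hL.exists_leftInverse_of_projective hf ha
  obtain ⟨i', r', h'⟩ := hL.exists_leftInverse_of_projective hf ha'
  obtain ⟨e⟩ := hP.nonempty_linearEquiv_of_leftInverse h
  obtain ⟨e'⟩ := hP'.nonempty_linearEquiv_of_leftInverse h'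
  exact ⟨e.symm.trans e'⟩

theorem exists_isIndecomposable_of_projective (P : Type v) [AddCommGroup P] [Module R P]
    [Module.Projective R P] [Nontrivial P] :
    ∃ L : Submodule R P, IsComplemented L ∧ IsIndecomposable R L := by
  obtain ⟨m, hm⟩ := exists_isCoatom_submodule R P
  have := isSimpleModule_iff_isCoatom.2 hm
  have := IsSimpleModule.nontrivial R (P ⧸ m)
  obtain ⟨L, f, ⟨C, hC⟩, hL, hf⟩ := exists_isIndecomposable_leftIdeal_surjective (R := R) (P ⧸ m)
  have := moduleProjective_of_isCompl hC
  obtain ⟨i, r, h⟩ := hL.exists_leftInverse_of_projective hf m.mkQ_surjective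
  exact ⟨LinearMap.range i, ⟨_, isCompl_range_ker_of_leftInverse h⟩,
    hL.of_linearEquiv (.ofInjective i h.injective)⟩

end IndecomposableProjectives

section InjectivePart

variable {R : Type u} [Ring R] {M : Type v} [AddCommGroup M] [Module R M]

theorem moduleInjective_sSup [Small.{v} R] [IsNoetherianRing R] {c : Set (Submodule R M)}
    (hne : c.Nonempty) (hdir : DirectedOn (· ≤ ·) c) (hc : ∀ E ∈ c, Module.Injective R E) :
    Module.Injective R ↥(sSup c) := by
  refine Module.Baer.injective fun I g => ?_
  have hfg : (LinearMap.range ((sSup c).subtype ∘ₗ g)).FG :=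
    LinearMap.range_eq_map ((sSup c).subtype ∘ₗ g) ▸ (IsNoetherian.noetherian ⊤).map _
  have hle : LinearMap.range ((sSup c).subtype ∘ₗ g) ≤ sSup c := by
    rintro _ ⟨x, rfl⟩
    exact (g x).2
  obtain ⟨E, hE, hEle⟩ := (CompleteLattice.isCompactElement_iff_le_of_directed_sSup_le _ _).1
    ((Submodule.fg_iff_compact _).1 hfg) c hne hdir hle
  obtain ⟨k, hk⟩ := Module.Baer.of_injective (hc E hE) I
    (((sSup c).subtype ∘ₗ g).codRestrict E fun x => hEle ⟨x, rfl⟩)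
  refine ⟨Submodule.inclusion (le_sSup hE) ∘ₗ k, fun x hx => Subtype.ext ?_⟩
  simpa using congrArg Subtype.val (hk x hx)

theorem exists_maximal_injective [Small.{v} R] [IsNoetherianRing R] (M : Type v) [AddCommGroup M]
    [Module R M] :
    ∃ E : Submodule R M, Maximal (fun E : Submodule R M => Module.Injective R E) E := by
  obtain ⟨E, -, hE⟩ := zorn_le_nonempty₀ {E : Submodule R M | Module.Injective R E}
    (fun c hc hchain E hE => ⟨sSup c, moduleInjective_sSup ⟨E, hE⟩ hchain.directedOn hc,
      fun _ => le_sSup⟩) ⊥ moduleInjective_of_subsingleton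
  exact ⟨E, hE⟩

theorem eq_bot_of_maximal_injective {E C : Submodule R M}
    (hE : Maximal (fun E : Submodule R M => Module.Injective R E) E) (hEC : Disjoint E C)
    [Module.Injective R C] : C = ⊥ := by
  have := hE.prop
  obtain ⟨e⟩ := nonempty_linearEquiv_sup hEC
  have : Module.Injective R ↥(E ⊔ C) :=
    have := moduleInjective_prod (R := R) (M := E) (N := C)
    moduleInjective_of_linearEquiv e
  exact hEC.symm.eq_bot_of_le (le_sup_right.trans (hE.le_of_ge this le_sup_left))

theorem exists_isIndecomposable_not_injective [Small.{v} R] [IsArtinianRing R] (P : Type v)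
    [AddCommGroup P] [Module R P] [Module.Projective R P] (hP : ¬ Module.Injective R P) :
    ∃ L : Submodule R P, IsComplemented L ∧ IsIndecomposable R L ∧ ¬ Module.Injective R L := by
  obtain ⟨E, hE⟩ := exists_maximal_injective (R := R) P
  have := hE.prop
  obtain ⟨C, hEC⟩ := isComplemented_of_moduleInjective E
  have := moduleProjective_of_isCompl hEC.symm
  have : Nontrivial C := Submodule.nontrivial_iff_ne_bot.2 fun hC => hP <| by
    have htop : E = ⊤ := eq_top_of_isCompl_bot (hC ▸ hEC)
    exact moduleInjective_of_linearEquiv (LinearEquiv.ofTop E htop)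
  obtain ⟨L, ⟨D, hLD⟩, hL⟩ := exists_isIndecomposable_of_projective (R := R) C
  obtain ⟨hdisj, hsup⟩ := disjoint_map_subtype_and_sup_eq hLD
  let eL : L ≃ₗ[R] L.map C.subtype := L.equivMapOfInjective C.subtype C.injective_subtype
  refine ⟨L.map C.subtype, isComplemented_of_disjoint_sup hdisj (hsup.symm ▸ ⟨E, hEC.symm⟩),
    hL.of_linearEquiv eL, fun _ => ?_⟩
  have := (hL.of_linearEquiv eL).nontrivial
  exact (Submodule.nontrivial_iff_ne_bot.1 this) (eq_bot_of_maximal_injective hE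
    (hEC.disjoint.mono_right (Submodule.map_subtype_le C L)))

end InjectivePart

section EssentialSubmodules

variable {R : Type u} [Ring R] {M N : Type v} [AddCommGroup M] [Module R M] [AddCommGroup N]
  [Module R N]

/-- A submodule is essential if it meets every nonzero submodule. -/
def IsEssential (N : Submodule R M) : Prop :=
  ∀ X : Submodule R M, Disjoint X N → X = ⊥

theorem exists_le_maximal_disjoint {α : Type*} [CompleteLattice α] [IsCompactlyGenerated α]
    {a b : α} (h : Disjoint a b) : ∃ c, a ≤ c ∧ Maximal (Disjoint · b) c :=
  zorn_le_nonempty₀ {c | Disjoint c b} (fun s hs hchain _ _ =>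
    ⟨sSup s, hchain.directedOn.disjoint_sSup_left.2 hs, fun _ => le_sSup⟩) a h

theorem isCompl_of_maximal_disjoint [Module.Injective R M] {A B : Submodule R M}
    (hA : Maximal (Disjoint · B) A) (hB : Maximal (Disjoint · A) B) : IsCompl A B := by
  have hdisj : Disjoint A B := hA.prop
  obtain ⟨ρ, hρ⟩ := Module.Injective.out _ (injective_coprod_subtype hdisj)
    (A.subtype ∘ₗ LinearMap.fst R A B)
  have hρA : ∀ x ∈ A, ρ x = x := fun x hx => by simpa using hρ (⟨x, hx⟩, 0)
  have hρB : ∀ x ∈ B, ρ x = 0 := fun x hx => by simpa using hρ (0, ⟨x, hx⟩)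
  have hcomap : B.comap ρ ≤ B := by
    refine hB.le_of_ge (Submodule.disjoint_def.2 fun x hx hxA => ?_) fun x hx => ?_
    · exact Submodule.disjoint_def.1 hdisj x hxA (hρA x hxA ▸ hx)
    · exact Submodule.mem_comap.2 (hρB x hx ▸ B.zero_mem)
  have hrange : LinearMap.range ρ ≤ A := by
    refine hA.le_of_ge (Submodule.disjoint_def.2 ?_) fun x hx => ⟨x, hρA x hx⟩
    rintro _ ⟨x, rfl⟩ hx
    exact hρB x (hcomap hx)
  have hker : LinearMap.ker ρ = B :=
    le_antisymm ((LinearMap.ker_le_comap ρ).trans hcomap) hρB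
  exact hker ▸ LinearMap.IsProj.isCompl ⟨fun x => hrange ⟨x, rfl⟩, hρA⟩

theorem exists_isCompl_isEssential [Module.Injective R M] {A B : Submodule R M}
    (h : Disjoint A B) :
    ∃ E F : Submodule R M, IsCompl E F ∧ A ≤ E ∧ B ≤ F ∧ IsEssential (A.submoduleOf E) := by
  obtain ⟨F, hBF, hF⟩ := exists_le_maximal_disjoint h.symm
  obtain ⟨E, hAE, hE⟩ := exists_le_maximal_disjoint (hF.prop.symm : Disjoint A F)
  have hFE : Maximal (Disjoint · E) F :=
    ⟨hE.prop.symm, fun G hG hFG => hF.le_of_ge (hG.mono_right hAE) hFG⟩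
  refine ⟨E, F, isCompl_of_maximal_disjoint hE hFE, hAE, hBF, fun X hX => ?_⟩
  have hXA : Disjoint (X.map E.subtype) A := by
    have := Submodule.disjoint_map E.injective_subtype hX
    rwa [Submodule.submoduleOf, Submodule.map_comap_subtype, inf_eq_right.2 hAE] at this
  have hXE : X.map E.subtype ≤ E := Submodule.map_subtype_le E X
  have hXF : X.map E.subtype ≤ F := le_sup_right.trans <| hF.le_of_ge
    (hXA.disjoint_sup_left_of_disjoint_sup_right (hFE.prop.mono_right (sup_le hXE hAE)))
    le_sup_left
  refine Submodule.map_injective_of_injective E.injective_subtype ?_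
  rw [Submodule.map_bot]
  exact (hE.prop.mono_left hXE).eq_bot_of_le hXF

theorem IsEssential.injective_of_comp_injective {P : Type*} [AddCommGroup P] [Module R P]
    {k : N →ₗ[R] M} (hk : IsEssential (LinearMap.range k)) {f : M →ₗ[R] P}
    (hf : Function.Injective (f ∘ₗ k)) : Function.Injective f := by
  refine LinearMap.ker_eq_bot.1 (hk _ (Submodule.disjoint_def.2 ?_))
  rintro _ hx ⟨n, rfl⟩
  rw [hf (hx.trans (map_zero (f ∘ₗ k)).symm), map_zero]

theorem exists_linearEquiv_comp_eq {E E' : Type v} [AddCommGroup E] [Module R E] [AddCommGroup E']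
    [Module R E'] [Module.Injective R E] [Module.Injective R E'] {k : N →ₗ[R] E} {k' : N →ₗ[R] E'}
    (hk : Function.Injective k) (hk' : Function.Injective k')
    (hess : IsEssential (LinearMap.range k)) (hess' : IsEssential (LinearMap.range k')) :
    ∃ φ : E ≃ₗ[R] E', φ.toLinearMap ∘ₗ k = k' := by
  obtain ⟨φ, hφ⟩ := Module.Injective.out k hk k'
  have hφk : φ ∘ₗ k = k' := LinearMap.ext hφ
  have hinj : Function.Injective φ := hess.injective_of_comp_injective (hφk ▸ hk')
  obtain ⟨s, hs⟩ := Module.Injective.out φ hinj LinearMap.id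
  have hcompl : IsCompl (LinearMap.range φ) (LinearMap.ker s) :=
    isCompl_range_ker_of_leftInverse hs
  have hbot : LinearMap.ker s = ⊥ :=
    hess' _ (hcompl.symm.disjoint.mono_right (hφk ▸ LinearMap.range_comp_le_range k φ))
  have htop : LinearMap.range φ = ⊤ := eq_top_of_isCompl_bot (hbot ▸ hcompl)
  exact ⟨.ofBijective φ ⟨hinj, LinearMap.range_eq_top.1 htop⟩, hφk⟩

end EssentialSubmodules

section Shift

variable {R : Type u} [Ring R] {N N' Z Z' : Type v} [AddCommGroup N] [Module R N]
  [AddCommGroup N'] [Module R N'] [AddCommGroup Z] [Module R Z] [AddCommGroup Z'] [Module R Z']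

/-- `Z` is the cokernel of an injective hull `k : N → E`, the hull being encoded as an embedding
with essential range into an injective module. -/
def IsMinimalCosyzygy (R : Type u) [Ring R] (N Z : Type v) [AddCommGroup N] [Module R N]
    [AddCommGroup Z] [Module R Z] : Prop :=
  ∃ (E : ModuleCat.{v} R) (k : N →ₗ[R] E) (h : E →ₗ[R] Z), Module.Injective R E ∧
    Function.Injective k ∧ IsEssential (LinearMap.range k) ∧ Function.Surjective h ∧
      Function.Exact k h

theorem IsMinimalCosyzygy.of_linearEquiv (h : IsMinimalCosyzygy R N Z) (e : N' ≃ₗ[R] N) :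
    IsMinimalCosyzygy R N' Z := by
  obtain ⟨E, k, p, hE, hk, hess, hp, hkp⟩ := h
  have hrange : LinearMap.range (k ∘ₗ e.toLinearMap) = LinearMap.range k :=
    LinearMap.range_comp_of_range_eq_top k e.range
  refine ⟨E, k ∘ₗ e.toLinearMap, p, hE, hk.comp e.injective, hrange ▸ hess, hp, ?_⟩
  rw [LinearMap.exact_iff] at hkp ⊢
  exact hkp.trans hrange.symm

theorem IsMinimalCosyzygy.nonempty_linearEquiv (h : IsMinimalCosyzygy R N Z)
    (h' : IsMinimalCosyzygy R N Z') : Nonempty (Z ≃ₗ[R] Z') := by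
  obtain ⟨E, k, p, _, hk, hess, hp, hkp⟩ := h
  obtain ⟨E', k', p', _, hk', hess', hp', hkp'⟩ := h'
  obtain ⟨φ, hφ⟩ := exists_linearEquiv_comp_eq hk hk' hess hess'
  have hmap : (LinearMap.range k).map φ.toLinearMap = LinearMap.range k' := by
    rw [← LinearMap.range_comp, hφ]
  exact ⟨(hkp.linearEquivOfSurjective hp).symm.trans
    ((Submodule.Quotient.equiv _ _ φ hmap).trans (hkp'.linearEquivOfSurjective hp'))⟩

/-- `Z` is the (`1`-)shift of `N`: the module `N` itself if `N` is injective, and the minimal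
cosyzygy of `N` otherwise. -/
def IsShift (R : Type u) [Ring R] (N Z : Type v) [AddCommGroup N] [Module R N]
    [AddCommGroup Z] [Module R Z] : Prop :=
  (Module.Injective R N ∧ Nonempty (N ≃ₗ[R] Z)) ∨
    (¬ Module.Injective R N ∧ IsMinimalCosyzygy R N Z)

theorem IsShift.nonempty_linearEquiv (h : IsShift R N Z) (h' : IsShift R N' Z')
    (e : N ≃ₗ[R] N') : Nonempty (Z ≃ₗ[R] Z') := by
  rcases h with ⟨hN, ⟨f⟩⟩ | ⟨hN, hZ⟩ <;> rcases h' with ⟨hN', ⟨f'⟩⟩ | ⟨hN', hZ'⟩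
  · exact ⟨f.symm.trans (e.trans f')⟩
  · exact absurd (moduleInjective_of_linearEquiv e) hN'
  · exact absurd (moduleInjective_of_linearEquiv e.symm) hN
  · exact hZ.nonempty_linearEquiv (hZ'.of_linearEquiv e)

end Shift

section DominantDimension

variable {R : Type u} [Ring R] {M N : Type v} [AddCommGroup M] [Module R M] [AddCommGroup N]
  [Module R N]

/-- `M` has dominant dimension at least two: it is the kernel of a map between modules that are
both projective and injective. -/
def HasDominantDimensionGETwo (R : Type u) [Ring R] (M : Type v) [AddCommGroup M] [Module R M] :
    Prop :=
  ∃ (Q' Q'' : ModuleCat.{v} R), Module.Projective R Q' ∧ Module.Injective R Q' ∧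
    Module.Projective R Q'' ∧ Module.Injective R Q'' ∧
      ∃ (ι : M →ₗ[R] Q') (θ : Q' →ₗ[R] Q''), Function.Injective ι ∧ Function.Exact ι θ

theorem HasDominantDimensionGETwo.of_linearEquiv (h : HasDominantDimensionGETwo R M)
    (e : N ≃ₗ[R] M) : HasDominantDimensionGETwo R N := by
  obtain ⟨Q', Q'', hp', hi', hp'', hi'', ι, θ, hι, hex⟩ := h
  refine ⟨Q', Q'', hp', hi', hp'', hi'', ι ∘ₗ e.toLinearMap, θ, hι.comp e.injective, ?_⟩
  rw [LinearMap.exact_iff] at hex ⊢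
  rw [hex, LinearMap.range_comp_of_range_eq_top ι e.range]

theorem HasDominantDimensionGETwo.prod (hM : HasDominantDimensionGETwo R M)
    (hN : HasDominantDimensionGETwo R N) : HasDominantDimensionGETwo R (M × N) := by
  obtain ⟨Q', Q'', _, _, _, _, ι, θ, hι, hex⟩ := hM
  obtain ⟨W', W'', _, _, _, _, κ, ψ, hκ, hex'⟩ := hN
  refine ⟨ModuleCat.of R (Q' × W'), ModuleCat.of R (Q'' × W''), ?_, ?_, ?_, ?_,
    ι.prodMap κ, θ.prodMap ψ, hι.prodMap hκ, ?_⟩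
  · exact inferInstanceAs (Module.Projective R (Q' × W'))
  · exact moduleInjective_prod (R := R) (M := Q') (N := W')
  · exact inferInstanceAs (Module.Projective R (Q'' × W''))
  · exact moduleInjective_prod (R := R) (M := Q'') (N := W'')
  · rw [LinearMap.exact_iff] at hex hex' ⊢
    rw [LinearMap.ker_prodMap, LinearMap.range_prodMap, hex, hex']

variable (R M) in
theorem hasDominantDimensionGETwo_of_projective_of_injective [hp : Module.Projective R M]
    [hi : Module.Injective R M] : HasDominantDimensionGETwo R M :=
  ⟨ModuleCat.of R M, ModuleCat.of R M, hp, hi, hp, hi, LinearMap.id, 0, Function.injective_id,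
    fun x => ⟨fun _ => ⟨x, rfl⟩, fun _ => rfl⟩⟩

theorem hasDominantDimensionGETwo_self [IsArtinianRing R]
    (h : ∀ L : Submodule R R, IsComplemented L → IsIndecomposable R L →
      HasDominantDimensionGETwo R L) : HasDominantDimensionGETwo R R := by
  have hbot : HasDominantDimensionGETwo R (⊥ : Submodule R R) :=
    have : Module.Injective R (⊥ : Submodule R R) := moduleInjective_of_subsingleton
    hasDominantDimensionGETwo_of_projective_of_injective R _
  have htop : HasDominantDimensionGETwo R (⊤ : Submodule R R) :=
    isComplemented_induction (motive := fun L : Submodule R R => HasDominantDimensionGETwo R L)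
      hbot h
      (fun A B hAB hA hB => (hA.prod hB).of_linearEquiv (nonempty_linearEquiv_sup hAB).some.symm)
      isComplemented_top
  exact htop.of_linearEquiv Submodule.topEquiv.symm

end DominantDimension

section EssentialCovers

variable {R : Type u} [Ring R] {M Z : Type v} [AddCommGroup M] [Module R M] [AddCommGroup Z]
  [Module R Z]

theorem isCompl_map_of_ker_eq_sup {g : M →ₗ[R] Z} (hg : Function.Surjective g)
    {A B E F : Submodule R M} (hker : LinearMap.ker g = A ⊔ B) (hEF : IsCompl E F) (hA : A ≤ E)
    (hB : B ≤ F) : IsCompl (E.map g) (F.map g) := by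
  refine ⟨Submodule.disjoint_def.2 ?_, codisjoint_iff.2 ?_⟩
  · rintro _ ⟨x, hx, rfl⟩ ⟨y, hy, hxy⟩
    have hsub : x - y ∈ A ⊔ B := hker ▸ LinearMap.sub_mem_ker_iff.2 hxy.symm
    obtain ⟨a, ha, b, hb, hab⟩ := Submodule.mem_sup.1 hsub
    have hxa : x - a = y + b := by rw [sub_eq_iff_eq_add, add_right_comm, add_assoc, hab]; abel
    have hzero : x - a = 0 := Submodule.disjoint_def.1 hEF.disjoint _ (E.sub_mem hx (hA ha))
      (hxa ▸ F.add_mem hy (hB hb))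
    rw [sub_eq_zero.1 hzero]
    exact (hker.ge.trans' le_sup_left) ha
  · rw [← Submodule.map_sup, hEF.sup_eq_top, Submodule.map_top, LinearMap.range_eq_top.2 hg]

theorem exists_isComplemented_isEssential_ker (hZ : IsIndecomposable R Z) [Module.Injective R M]
    {g : M →ₗ[R] Z} (hg : Function.Surjective g) {A B : Submodule R M} (hAB : Disjoint A B)
    (hker : LinearMap.ker g = A ⊔ B) (hA : ¬ Module.Injective R A) :
    ∃ E : Submodule R M, IsComplemented E ∧ A ≤ E ∧ IsEssential (A.submoduleOf E) ∧
      Function.Surjective (g.domRestrict E) ∧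
        LinearMap.ker (g.domRestrict E) = A.submoduleOf E := by
  obtain ⟨E, F, hEF, hAE, hBF, hess⟩ := exists_isCompl_isEssential hAB
  have hinf : LinearMap.ker g ⊓ E = A := by
    rw [hker, sup_inf_assoc_of_le B hAE, (hEF.disjoint.symm.mono_left hBF).eq_bot, sup_bot_eq]
  have hcompl := isCompl_map_of_ker_eq_sup hg hker hEF hAE hBF
  have hne : E.map g ≠ ⊥ := fun h => hA <| by
    have hEker : E ≤ LinearMap.ker g := Submodule.map_le_iff_le_comap.1 h.le
    have hEA : E = A := (inf_eq_right.2 hEker).symm.trans hinf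
    exact hEA ▸ moduleInjective_of_isCompl hEF
  have hbot : F.map g = ⊥ := (hZ.eq_bot_or_eq_bot hcompl).resolve_left hne
  refine ⟨E, ⟨F, hEF⟩, hAE, hess, LinearMap.range_eq_top.1 ?_, ?_⟩
  · have htop : E.map g = ⊤ := eq_top_of_isCompl_bot (hbot ▸ hcompl)
    rw [LinearMap.range_domRestrict, htop]
  · rw [LinearMap.ker_domRestrict, Submodule.submoduleOf, ← hinf, Submodule.comap_inf,
      Submodule.comap_subtype_self, inf_top_eq]

theorem moduleProjective_of_injective_ker [Module.Projective R M] {g : M →ₗ[R] Z}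
    (hg : Function.Surjective g) [Module.Injective R (LinearMap.ker g)] :
    Module.Projective R Z := by
  obtain ⟨C, hC⟩ := isComplemented_of_moduleInjective (LinearMap.ker g)
  have := moduleProjective_of_isCompl hC.symm
  exact .of_equiv ((Submodule.quotientEquivOfIsCompl _ _ hC).symm.trans
    (g.quotKerEquivOfSurjective hg))

theorem moduleInjective_of_surjective_of_projective [Module.Injective R M] [Module.Projective R Z]
    {g : M →ₗ[R] Z} (hg : Function.Surjective g) : Module.Injective R Z := by
  obtain ⟨s, hs⟩ := Module.projective_lifting_property g LinearMap.id hg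
  exact moduleInjective_of_leftInverse (LinearMap.congr_fun hs)

theorem IsIndecomposable.exists_isShift [Small.{v} R] [IsArtinianRing R] {Q₀ Q₁ : Type v}
    [AddCommGroup Q₀] [Module R Q₀] [Module.Projective R Q₀] [Module.Injective R Q₀]
    [AddCommGroup Q₁] [Module R Q₁] [hp₁ : Module.Projective R Q₁] [hi₁ : Module.Injective R Q₁]
    (hZ : IsIndecomposable R Z) {g : Q₀ →ₗ[R] Z} (hg : Function.Surjective g)
    [Module.Projective R (LinearMap.ker g)] {j : Z →ₗ[R] Q₁} (hj : Function.Injective j) :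
    ∃ N : ModuleCat.{v} R, Module.Projective R N ∧ IsIndecomposable R N ∧
      HasDominantDimensionGETwo R N ∧ IsShift R N Z := by
  by_cases hZp : Module.Projective R Z
  · have hZi : Module.Injective R Z := moduleInjective_of_surjective_of_projective hg
    exact ⟨.of R Z, hZp, hZ, hasDominantDimensionGETwo_of_projective_of_injective R Z,
      .inl ⟨hZi, ⟨.refl R Z⟩⟩⟩
  obtain ⟨L, ⟨C, hLC⟩, hL, hLi⟩ := exists_isIndecomposable_not_injective (R := R) (LinearMap.ker g)
    fun _ => hZp (moduleProjective_of_injective_ker hg)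
  have hLp := moduleProjective_of_isCompl hLC
  obtain ⟨hdisj, hsup⟩ := disjoint_map_subtype_and_sup_eq hLC
  let N : Submodule R Q₀ := L.map (LinearMap.ker g).subtype
  let e : L ≃ₗ[R] N := L.equivMapOfInjective _ (LinearMap.ker g).injective_subtype
  have hNi : ¬ Module.Injective R N := fun _ => hLi (moduleInjective_of_linearEquiv e.symm)
  obtain ⟨E, ⟨F, hEF⟩, hNE, hess, hsurj, hker⟩ :=
    exists_isComplemented_isEssential_ker hZ hg hdisj hsup.symm hNi
  have hEp := moduleProjective_of_isCompl hEF
  have hEi := moduleInjective_of_isCompl hEF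
  have hrange := Submodule.range_inclusion N E hNE
  have hinj := Submodule.inclusion_injective hNE
  have hex : Function.Exact (Submodule.inclusion hNE) (g.domRestrict E) :=
    LinearMap.exact_iff.2 (hker.trans hrange.symm)
  exact ⟨.of R N, .of_equiv e, hL.of_linearEquiv e,
    ⟨.of R E, .of R Q₁, hEp, hEi, hp₁, hi₁, Submodule.inclusion hNE, j ∘ₗ g.domRestrict E, hinj,
      hex.comp_injective j hj (map_zero j)⟩,
    .inr ⟨hNi, .of R E, Submodule.inclusion hNE, g.domRestrict E, hEi, hinj, hrange ▸ hess, hsurj,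
      hex⟩⟩

end EssentialCovers

section IsoClasses

variable {R : Type u} [Ring R]

theorem IsIndecomposableMod.isIndecomposable {Z : ModuleCat.{u} R} (h : IsIndecomposableMod Z) :
    IsIndecomposable R Z where
  nontrivial := not_subsingleton_iff_nontrivial.1 fun _ =>
    h.1 (ModuleCat.isZero_of_subsingleton Z)
  eq_bot_or_eq_bot {p q} hpq := by
    have e : Z ≅ ModuleCat.of R p ⊞ ModuleCat.of R q :=
      (Submodule.prodEquivOfIsCompl p q hpq).symm.toModuleIso ≪≫
        (ModuleCat.biprodIsoProd (ModuleCat.of R p) (ModuleCat.of R q)).symm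
    have heq_bot {r : Submodule R Z} (hr : IsZero (ModuleCat.of R r)) : r = ⊥ :=
      Submodule.subsingleton_iff_eq_bot.1 (ModuleCat.subsingleton_of_isZero hr)
    exact (h.2 _ _ ⟨e⟩).imp heq_bot heq_bot

theorem exists_rel_of_mk_modIsoClasses_eq {P P' : ModuleCat.{u} R → Prop}
    [Finite (ModIsoClasses P')]
    (hcard : Cardinal.mk (ModIsoClasses P) = Cardinal.mk (ModIsoClasses P'))
    {T : ModuleCat.{u} R → ModuleCat.{u} R → Prop} (hP' : ∀ {Z S}, T Z S → P' S)
    (htotal : ∀ Z, P Z → ∃ S, T Z S)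
    (hinj : ∀ {Z Z' S S'}, T Z S → T Z' S' → Nonempty (S ≅ S') → Nonempty (Z ≅ Z'))
    {S : ModuleCat.{u} R} (hS : P' S) : ∃ Z S', T Z S' ∧ Nonempty (S' ≅ S) := by
  choose top hT using fun Z : {Z // P Z} => htotal Z.1 Z.2
  let F : ModIsoClasses P → ModIsoClasses P' := fun c => Quotient.mk _ ⟨top c.out, hP' (hT c.out)⟩
  have hF : Function.Injective F := fun c d hcd =>
    Quotient.out_equiv_out.1 (hinj (hT c.out) (hT d.out) (Quotient.exact hcd))
  obtain ⟨e⟩ := Cardinal.eq.1 hcard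
  have : Finite (ModIsoClasses P) := .of_equiv _ e.symm
  obtain ⟨c, hc⟩ := hF.surjective_of_finite e (Quotient.mk _ ⟨S, hS⟩)
  exact ⟨c.out.1, top c.out, hT c.out, Quotient.exact hc⟩

end IsoClasses

section ProjectiveDimension

variable {R : Type u} [Ring R]

theorem hasProjectiveDimensionLE_one_of_exact {P₁ P₀ Y : ModuleCat.{u} R} [hP₁ : Projective P₁]
    [hP₀ : Projective P₀] {f : P₁ ⟶ P₀} {g : P₀ ⟶ Y} (hf : Function.Injective f)
    (hg : Function.Surjective g) (hfg : Function.Exact f g) : HasProjectiveDimensionLE Y 1 :=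
  ((ModuleCat.shortComplex_shortExact
    (ModuleCat.shortComplexOfCompEqZero f.hom g.hom hfg.linearMap_comp_eq_zero) hfg hf
    hg).hasProjectiveDimensionLT_X₃_iff 0 hP₀).2 (projective_iff_hasProjectiveDimensionLT_one.1 hP₁)

theorem moduleProjective_ker_of_hasProjectiveDimensionLE_one {P Z : ModuleCat.{u} R}
    [hP : Module.Projective R P] [hZ : HasProjectiveDimensionLE Z 1] {g : P ⟶ Z}
    (hg : Function.Surjective g) : Module.Projective R (LinearMap.ker g.hom) := by
  have hexact := ModuleCat.shortComplex_shortExact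
    (ModuleCat.shortComplexOfCompEqZero (LinearMap.ker g.hom).subtype g.hom
      (LinearMap.comp_ker_subtype _))
    (LinearMap.exact_subtype_ker_map g.hom) (Submodule.injective_subtype _) hg
  rw [IsProjective.iff_projective] at hP ⊢
  rw [projective_iff_hasProjectiveDimensionLT_one]
  exact (hexact.hasProjectiveDimensionLT_X₃_iff 0 hP).1 hZ

end ProjectiveDimension

section Counting

variable {R : Type u} [Ring R] [IsArtinianRing R]

/-- The correspondence that is counted: `Z` is the shift of the projective cover `N` of the simple
module `S`, and `N` has dominant dimension at least two. -/
def IsShiftOfCover (Z S : ModuleCat.{u} R) : Prop :=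
  Simple S ∧ ∃ N : ModuleCat.{u} R, Module.Projective R N ∧ IsIndecomposable R N ∧
    HasDominantDimensionGETwo R N ∧ IsShift R N Z ∧
      ∃ p : N →ₗ[R] S, Function.Surjective p

theorem IsShift.exists_isShiftOfCover {N Z : ModuleCat.{u} R} (hNZ : IsShift R N Z)
    [hNp : Module.Projective R N] (hN : IsIndecomposable R N)
    (hdom : HasDominantDimensionGETwo R N) : ∃ S, IsShiftOfCover Z S := by
  have := hN.nontrivial
  obtain ⟨m, hm⟩ := exists_isCoatom_submodule R N
  have hS : Simple (ModuleCat.of R (N ⧸ m)) :=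
    (simple_iff_isSimpleModule' _).2 (isSimpleModule_iff_isCoatom.2 hm)
  exact ⟨_, hS, N, hNp, hN, hdom, hNZ, m.mkQ, m.mkQ_surjective⟩

theorem IsShiftOfCover.nonempty_iso {Z Z' S S' : ModuleCat.{u} R} (h : IsShiftOfCover Z S)
    (h' : IsShiftOfCover Z' S') (hSS' : Nonempty (S ≅ S')) : Nonempty (Z ≅ Z') := by
  obtain ⟨_, N, _, hN, _, hNZ, p, hp⟩ := h
  obtain ⟨hS', N', _, hN', _, hNZ', p', hp'⟩ := h'
  have := (simple_iff_isSimpleModule' S').1 hS'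
  let e : S ≃ₗ[R] S' := hSS'.some.toLinearEquiv
  obtain ⟨eN⟩ := hN.nonempty_linearEquiv_of_simple_quotient hN' (a := e.toLinearMap ∘ₗ p)
    (e.surjective.comp hp) hp'
  exact (hNZ.nonempty_linearEquiv hNZ' eN).map LinearEquiv.toModuleIso

theorem IsShiftOfCover.hasDominantDimensionGETwo {Z S : ModuleCat.{u} R} (h : IsShiftOfCover Z S)
    {P : Type u} [AddCommGroup P] [Module R P] [Module.Projective R P] (hP : IsIndecomposable R P)
    {p : P →ₗ[R] S} (hp : Function.Surjective p) : HasDominantDimensionGETwo R P := by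
  obtain ⟨hS, N, _, hN, hdom, _, q, hq⟩ := h
  have := (simple_iff_isSimpleModule' S).1 hS
  exact hdom.of_linearEquiv (hP.nonempty_linearEquiv_of_simple_quotient hN hp hq).some

theorem hasDominantDimensionGETwo_self_of_mk_modIsoClasses_eq {P : ModuleCat.{u} R → Prop}
    (hP : ∀ Z, P Z → ∃ S, IsShiftOfCover Z S)
    (hcard : Cardinal.mk (ModIsoClasses P)
      = Cardinal.mk (ModIsoClasses fun S : ModuleCat.{u} R => Simple S)) :
    HasDominantDimensionGETwo R R := by
  have := finite_modIsoClasses_simple R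
  refine hasDominantDimensionGETwo_self fun L ⟨C, hLC⟩ hL => ?_
  have := moduleProjective_of_isCompl hLC
  have := hL.nontrivial
  obtain ⟨m, hm⟩ := exists_isCoatom_submodule R L
  have hS : Simple (ModuleCat.of R (L ⧸ m)) :=
    (simple_iff_isSimpleModule' _).2 (isSimpleModule_iff_isCoatom.2 hm)
  obtain ⟨Z, S, hZS, ⟨e⟩⟩ := exists_rel_of_mk_modIsoClasses_eq (T := IsShiftOfCover) hcard
    And.left hP IsShiftOfCover.nonempty_iso hS
  exact hZS.hasDominantDimensionGETwo hL (p := e.toLinearEquiv.symm.toLinearMap ∘ₗ m.mkQ)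
    (e.toLinearEquiv.symm.surjective.comp m.mkQ_surjective)

theorem IsSummand.exists_isShiftOfCover {Y Z Q₀ Q₁ : ModuleCat.{u} R}
    [HasProjectiveDimensionLE Y 1] [Module.Projective R Q₀] [Module.Injective R Q₀]
    [Module.Projective R Q₁] [Module.Injective R Q₁]
    {g : Q₀ ⟶ Y} (hg : Function.Surjective g) {j : Y ⟶ Q₁} (hj : Function.Injective j)
    (hZY : IsSummand Z Y) (hZ : IsIndecomposableMod Z) : ∃ S, IsShiftOfCover Z S := by
  obtain ⟨ι, ρ, hιρ⟩ := hZY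
  have hretract : Function.LeftInverse ρ ι := fun z => ConcreteCategory.congr_hom hιρ z
  have hpd : HasProjectiveDimensionLE Z 1 := Retract.hasProjectiveDimensionLT ⟨ι, ρ, hιρ⟩ 2
  have hgρ : Function.Surjective (g ≫ ρ) := hretract.surjective.comp hg
  have := moduleProjective_ker_of_hasProjectiveDimensionLE_one hgρ
  obtain ⟨N, hNp, hN, hdom, hNZ⟩ := hZ.isIndecomposable.exists_isShift (g := (g ≫ ρ).hom) hgρ
    (j := (ι ≫ j).hom) (hj.comp hretract.injective)
  exact hNZ.exists_isShiftOfCover hN hdom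

end Counting

theorem dominant_dimension_ge_two_of_tilting_general {R : Type u} [Ring R] [IsArtinianRing R]
    (Y Q : ModuleCat.{u} R) (hQproj : Projective Q) (hQinj : Injective Q)
    (hgen : ∃ (n : ℕ) (g : ModuleCat.of R (Fin n → Q) ⟶ Y), Function.Surjective g)
    (hcogen : ∃ (n : ℕ) (f : Y ⟶ ModuleCat.of R (Fin n → Q)), Function.Injective f)
    (hpd : ∃ (P₀ P₁ : ModuleCat.{u} R), Projective P₀ ∧ Projective P₁ ∧
      ∃ (f₁ : P₁ ⟶ P₀) (g : P₀ ⟶ Y),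
        Function.Injective f₁ ∧ Function.Surjective g ∧ Function.Exact f₁ g)
    (hcount : Cardinal.mk (ModIsoClasses (fun Z => IsIndecomposableMod Z ∧ IsSummand Z Y))
      = Cardinal.mk (ModIsoClasses (fun S : ModuleCat.{u} R => Simple S))) :
    ∃ (Q' Q'' : ModuleCat.{u} R),
      Projective Q' ∧ Injective Q' ∧ Projective Q'' ∧ Injective Q'' ∧
      ∃ (ι : ModuleCat.of R R ⟶ Q') (θ : Q' ⟶ Q''),
        Function.Injective ι ∧ Function.Exact ι θ := by
  obtain ⟨a, g, hg⟩ := hgen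
  obtain ⟨b, j, hj⟩ := hcogen
  obtain ⟨P₀, P₁, _, _, f₁, f₀, hf₁, hf₀, hexact⟩ := hpd
  have := hasProjectiveDimensionLE_one_of_exact hf₁ hf₀ hexact
  have := (IsProjective.iff_projective (R := R) Q).2 hQproj
  have := (Module.injective_iff_injective_object R Q).2 hQinj
  have hpow (n : ℕ) : Module.Projective R (Fin n → Q) :=
    .of_equiv (DirectSum.linearEquivFunOnFintype R (Fin n) fun _ => Q)
  obtain ⟨Q', Q'', hp', hi', hp'', hi'', ι, θ, hι, hιθ⟩ :=
    hasDominantDimensionGETwo_self_of_mk_modIsoClasses_eq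
      (fun Z hZ => hZ.2.exists_isShiftOfCover hg hj hZ.1) hcount
  exact ⟨Q', Q'', (IsProjective.iff_projective Q').1 hp',
    (Module.injective_iff_injective_object R Q').1 hi', (IsProjective.iff_projective Q'').1 hp'',
    (Module.injective_iff_injective_object R Q'').1 hi'', ModuleCat.ofHom ι, ModuleCat.ofHom θ,
    hι, hιθ⟩

/-- Let `Γ` be a finite-dimensional algebra of global dimension `≤ 2`
admitting a tilting module `Y` (projective dimension `≤ 1`, no self-extensions, as many
indecomposable summands up to isomorphism as there are simple modules) which is generated
and cogenerated by a projective-injective module `Q`.  Then `Γ` has dominant dimension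
`≥ 2`: there is an exact sequence `0 → Γ → Q' → Q''` with `Q'`, `Q''`
projective-injective. -/
theorem dominant_dimension_ge_two_of_tilting [FiniteDimensional K Γ]
    -- global dimension ≤ 2
    (hgl : ∀ M : ModuleCat.{u} Γ, ∃ (P₀ P₁ P₂ : ModuleCat.{u} Γ),
      Projective P₀ ∧ Projective P₁ ∧ Projective P₂ ∧
      ∃ (f₂ : P₂ ⟶ P₁) (f₁ : P₁ ⟶ P₀) (g : P₀ ⟶ M),
        Function.Injective f₂ ∧ Function.Surjective g ∧
        Function.Exact f₂ f₁ ∧ Function.Exact f₁ g)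
    (Y Q : ModuleCat.{u} Γ)
    -- Q is projective-injective
    (hQproj : Projective Q) (hQinj : Injective Q)
    -- Y is generated and cogenerated by Q
    (hgen : ∃ (n : ℕ) (g : ModuleCat.of Γ (Fin n → Q) ⟶ Y), Function.Surjective g)
    (hcogen : ∃ (n : ℕ) (f : Y ⟶ ModuleCat.of Γ (Fin n → Q)), Function.Injective f)
    -- Y has projective dimension ≤ 1
    (hpd : ∃ (P₀ P₁ : ModuleCat.{u} Γ), Projective P₀ ∧ Projective P₁ ∧
      ∃ (f₁ : P₁ ⟶ P₀) (g : P₀ ⟶ Y),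
        Function.Injective f₁ ∧ Function.Surjective g ∧ Function.Exact f₁ g)
    -- Ext¹(Y, Y) = 0: every self-extension of Y splits
    (hext : ∀ (E : ModuleCat.{u} Γ) (f : Y ⟶ E) (g : E ⟶ Y),
      Function.Injective f → Function.Surjective g → Function.Exact f g →
      ∃ s : E ⟶ Y, f ≫ s = 𝟙 Y)
    -- the number of iso classes of indecomposable summands of Y equals
    -- the number of iso classes of simple Γ-modules
    (hcount : Cardinal.mk (ModIsoClasses (fun Z => IsIndecomposableMod Z ∧ IsSummand Z Y))
      = Cardinal.mk (ModIsoClasses (fun S : ModuleCat.{u} Γ => Simple S))) :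
    -- dominant dimension ≥ 2
    ∃ (Q' Q'' : ModuleCat.{u} Γ),
      Projective Q' ∧ Injective Q' ∧ Projective Q'' ∧ Injective Q'' ∧
      ∃ (ι : ModuleCat.of Γ Γ ⟶ Q') (θ : Q' ⟶ Q''),
        Function.Injective ι ∧ Function.Exact ι θ :=
  have : IsArtinianRing Γ := isArtinian_of_tower K inferInstance
  dominant_dimension_ge_two_of_tilting_general Y Q hQproj hQinj hgen hcogen hpd hcount
end

section
/- Let B be a finitely generated algebra over an algebraically closed field K, with a complete set of orthogonal idempotents e₁,…,eₙ, and let X be a K-point of the representation scheme of d-dimensional representations of B (with prescribed dimensions at each idempotent). If Ext²_B(X, X) = 0, then X is a smooth point of the representation scheme. -/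
universe u

/-!
Let `X` be the `B`-module of `θ`. Against the syzygy of `X` in the presentation `B ⊗[K] X → X`, a
Hochschild 2-cocycle with values in `End X` defines an extension of the syzygy by `X`, and a
splitting of that extension yields a cochain bounding the cocycle; hence `Ext²_B(X, X) = 0` gives
`HH²(B, End X) = 0`. The multiplicativity defect of a linear lift of `φ` along a square-zero
extension with kernel `End X` is such a cocycle, and the bounding cochain corrects the lift to an
algebra map. A surjection of finite-dimensional local algebras is a tower of extensions with
one-dimensional kernel `K`, whose matrix algebras are of this form. Finally, two families of
complete orthogonal idempotents with the same image under a local homomorphism are conjugate by a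
unit over `1`, so the lift can be conjugated to take the prescribed values on the idempotents.
-/

/-- `Ext¹_B(Z, Y) = 0`, in Yoneda's form: every extension of `Z` by `Y` splits. -/
def ExtOneVanishes (B : Type*) [Ring B] (Z Y : Type u) [AddCommGroup Z] [Module B Z]
    [AddCommGroup Y] [Module B Y] : Prop :=
  ∀ (E : Type u) (_ : AddCommGroup E) (_ : Module B E) (f : Y →ₗ[B] E) (g : E →ₗ[B] Z),
    Function.Injective f → Function.Surjective g → Function.Exact f g →
    ∃ s : E →ₗ[B] Y, s.comp f = LinearMap.id

/-- `Ext²_B(X, Y) = 0`, by dimension shifting: `Ext¹_B(Z, Y) = 0` for every syzygy `Z` of `X`. -/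
def ExtTwoVanishes (B : Type*) [Ring B] (X Y : Type u) [AddCommGroup X] [Module B X]
    [AddCommGroup Y] [Module B Y] : Prop :=
  ∀ (Z P : Type u) (_ : AddCommGroup Z) (_ : Module B Z) (_ : AddCommGroup P) (_ : Module B P),
    Module.Projective B P →
    ∀ (ι : Z →ₗ[B] P) (π : P →ₗ[B] X), Function.Injective ι → Function.Surjective π →
      Function.Exact ι π → ExtOneVanishes B Z Y

section CrossedHom

variable {K : Type*} [CommRing K] {B : Type*} [Ring B] [Algebra K B]

/-- A `K`-linear derivation of `B` with values in the bimodule `Hom_K(Z, Y)`, that is, a Hochschild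
1-cocycle; these are the cocycles of extensions of `Z` by `Y` that split over `K`. -/
structure CrossedHom (K B Z Y : Type*) [CommRing K] [Ring B] [Algebra K B]
    [AddCommGroup Z] [Module K Z] [Module B Z] [AddCommGroup Y] [Module K Y] [Module B Y] where
  toLinearMap : B →ₗ[K] Z →ₗ[K] Y
  leibniz : ∀ a b z, toLinearMap (a * b) z = a • toLinearMap b z + toLinearMap a (b • z)

namespace CrossedHom

variable {Z Y : Type*} [AddCommGroup Z] [Module K Z] [Module B Z]
  [AddCommGroup Y] [Module K Y] [Module B Y] (γ : CrossedHom K B Z Y)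

theorem map_one_apply (z : Z) : γ.toLinearMap 1 z = 0 := by
  simpa using γ.leibniz 1 1 z

theorem map_algebraMap_apply (r : K) (z : Z) : γ.toLinearMap (algebraMap K B r) z = 0 := by
  rw [Algebra.algebraMap_eq_smul_one, map_smul, LinearMap.smul_apply, map_one_apply, smul_zero]

/-- The extension of `Z` by `Y` with cocycle `γ`: the group `Y × Z` on which `a : B` acts by
`(y, z) ↦ (a • y + γ a z, a • z)`. -/
def Extension (_ : CrossedHom K B Z Y) : Type _ := Y × Z

instance : AddCommGroup γ.Extension := inferInstanceAs (AddCommGroup (Y × Z))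

instance : SMul B γ.Extension where
  smul a p := (a • p.1 + γ.toLinearMap a p.2, a • p.2)

instance : Module B γ.Extension :=
  .ofMinimalAxioms
    (fun a p q ↦ by
      refine Prod.ext ?_ (smul_add a p.2 q.2)
      change a • (p.1 + q.1) + γ.toLinearMap a (p.2 + q.2) =
        (a • p.1 + γ.toLinearMap a p.2) + (a • q.1 + γ.toLinearMap a q.2)
      rw [smul_add, map_add, add_add_add_comm])
    (fun a b p ↦ by
      refine Prod.ext ?_ (add_smul a b p.2)
      change (a + b) • p.1 + γ.toLinearMap (a + b) p.2 =
        (a • p.1 + γ.toLinearMap a p.2) + (b • p.1 + γ.toLinearMap b p.2)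
      rw [add_smul, map_add, LinearMap.add_apply, add_add_add_comm])
    (fun a b p ↦ by
      refine Prod.ext ?_ (mul_smul a b p.2)
      change (a * b) • p.1 + γ.toLinearMap (a * b) p.2 =
        a • (b • p.1 + γ.toLinearMap b p.2) + γ.toLinearMap a (b • p.2)
      rw [γ.leibniz, smul_add, mul_smul, add_assoc])
    (fun p ↦ by
      refine Prod.ext ?_ (one_smul B p.2)
      change (1 : B) • p.1 + γ.toLinearMap 1 p.2 = p.1
      rw [one_smul, map_one_apply, add_zero])

/-- The inclusion of `Y` in the extension. -/
def inl : Y →ₗ[B] γ.Extension where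
  toFun y := ((y, 0) : Y × Z)
  map_add' _ _ := Prod.ext rfl (add_zero (0 : Z)).symm
  map_smul' a y := by
    refine Prod.ext ?_ (smul_zero a).symm
    change a • y = a • y + γ.toLinearMap a 0
    rw [map_zero, add_zero]

/-- The projection of the extension onto `Z`. -/
def snd : γ.Extension →ₗ[B] Z where
  toFun p := p.2
  map_add' _ _ := rfl
  map_smul' _ _ := rfl

/-- The section of `snd` at the level of groups; `γ` measures its failure to be `B`-linear. -/
def inr : Z →+ γ.Extension where
  toFun z := ((0, z) : Y × Z)
  map_zero' := rfl
  map_add' _ _ := Prod.ext (add_zero (0 : Y)).symm rfl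

theorem smul_inr (a : B) (z : Z) :
    a • γ.inr z = γ.inl (γ.toLinearMap a z) + γ.inr (a • z) := by
  refine Prod.ext ?_ ?_
  · change a • (0 : Y) + γ.toLinearMap a z = γ.toLinearMap a z + 0
    rw [smul_zero, add_comm]
  · exact (zero_add (a • z)).symm

theorem inl_injective : Function.Injective γ.inl := fun _ _ h ↦ congrArg Prod.fst h

theorem snd_surjective : Function.Surjective γ.snd := fun z ↦ ⟨γ.inr z, rfl⟩

theorem exact_inl_snd : Function.Exact γ.inl γ.snd := fun p ↦
  ⟨fun h ↦ ⟨p.1, Prod.ext rfl h.symm⟩, fun ⟨_, h⟩ ↦ h ▸ rfl⟩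

end CrossedHom

theorem ExtOneVanishes.exists_inner {Z Y : Type u} [AddCommGroup Z] [Module K Z] [Module B Z]
    [IsScalarTower K B Z] [AddCommGroup Y] [Module K Y] [Module B Y] [IsScalarTower K B Y]
    (H : ExtOneVanishes B Z Y) (γ : CrossedHom K B Z Y) :
    ∃ k : Z →ₗ[K] Y, ∀ a z, γ.toLinearMap a z = a • k z - k (a • z) := by
  obtain ⟨s, hs⟩ := H γ.Extension inferInstance inferInstance γ.inl γ.snd
    γ.inl_injective γ.snd_surjective γ.exact_inl_snd
  have hinner (a : B) (z : Z) :
      γ.toLinearMap a z = a • s (γ.inr z) - s (γ.inr (a • z)) := by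
    rw [← map_smul, γ.smul_inr, map_add, add_sub_cancel_right]
    exact (LinearMap.congr_fun hs _).symm
  refine ⟨{ toFun := fun z ↦ s (γ.inr z), map_add' := by simp, map_smul' := fun r z ↦ ?_ }, hinner⟩
  have h := hinner (algebraMap K B r) z
  rw [γ.map_algebraMap_apply, algebraMap_smul, algebraMap_smul] at h
  exact (sub_eq_zero.mp h.symm).symm

end CrossedHom

section Hochschild

variable {K : Type*} [CommRing K] {B D : Type*} [Ring B] [Algebra K B] [Ring D] [Algebra K D]

/-- Hochschild 2-cocycles of `B` with values in `D`, a `B`-bimodule through `θ`. -/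
def IsHochschildTwoCocycle (θ : B →ₐ[K] D) (c : B →ₗ[K] B →ₗ[K] D) : Prop :=
  ∀ a b b', θ a * c b b' + c a (b * b') = c (a * b) b' + c a b * θ b'

/-- Hochschild 2-coboundaries of `B` with values in `D`, a `B`-bimodule through `θ`. -/
def IsHochschildTwoCoboundary (θ : B →ₐ[K] D) (c : B →ₗ[K] B →ₗ[K] D) : Prop :=
  ∃ h : B →ₗ[K] D, ∀ a b, c a b = θ a * h b - h (a * b) + h a * θ b

/-- `HH²(B, D) = 0`, where `D` is a `B`-bimodule through `θ`. -/
def HochschildTwoVanishes (θ : B →ₐ[K] D) : Prop :=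
  ∀ c, IsHochschildTwoCocycle θ c → IsHochschildTwoCoboundary θ c

theorem HochschildTwoVanishes.of_algEquiv {D' : Type*} [Ring D'] [Algebra K D'] {θ : B →ₐ[K] D}
    (e : D ≃ₐ[K] D') (H : HochschildTwoVanishes (e.toAlgHom.comp θ)) :
    HochschildTwoVanishes θ := by
  intro c hc
  obtain ⟨h, hh⟩ := H (c.compr₂ e.toLinearMap) fun a b b' ↦ by
    simpa using congrArg e (hc a b b')
  refine ⟨e.symm.toLinearMap ∘ₗ h, fun a b ↦ e.injective ?_⟩
  simpa using hh a b

end Hochschild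

section Syzygy

open scoped TensorProduct

variable (K : Type*) [CommRing K] (B : Type*) [Ring B] [Algebra K B]
  (X : Type*) [AddCommGroup X] [Module K X] [Module B X] [IsScalarTower K B X]

/-- The presentation `b ⊗ x ↦ b • x` of `X` by the induced module `B ⊗[K] X`. -/
def inducedAction : B ⊗[K] X →ₗ[B] X :=
  TensorProduct.AlgebraTensorModule.lift (LinearMap.toSpanSingleton B (X →ₗ[K] X) LinearMap.id)

variable {K B X}

@[simp]
theorem inducedAction_tmul (b : B) (x : X) : inducedAction K B X (b ⊗ₜ x) = b • x := rfl

theorem inducedAction_surjective : Function.Surjective (inducedAction K B X) :=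
  fun x ↦ ⟨1 ⊗ₜ x, by simp⟩

variable (K B X)

/-- The `K`-linear retraction `t ↦ t - 1 ⊗ π t` of `B ⊗[K] X` onto the kernel of the action
map `π`. -/
def syzygyRetraction : B ⊗[K] X →ₗ[K] LinearMap.ker (inducedAction K B X) :=
  LinearMap.codRestrict ((LinearMap.ker (inducedAction K B X)).restrictScalars K)
    (LinearMap.id - TensorProduct.mk K B X 1 ∘ₗ (inducedAction K B X).restrictScalars K)
    fun t ↦ by simp

variable {K B X}

@[simp]
theorem coe_syzygyRetraction (t : B ⊗[K] X) :
    (syzygyRetraction K B X t : B ⊗[K] X) = t - 1 ⊗ₜ inducedAction K B X t := rfl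

theorem syzygyRetraction_smul (a : B) (t : B ⊗[K] X) :
    syzygyRetraction K B X (a • t) =
      a • syzygyRetraction K B X t + syzygyRetraction K B X (a ⊗ₜ inducedAction K B X t) := by
  ext
  simp [smul_sub, TensorProduct.smul_tmul']

end Syzygy

section ExtToHochschild

open scoped TensorProduct

variable {K : Type*} [CommRing K]

namespace IsHochschildTwoCocycle

variable {B : Type*} [Ring B] [Algebra K B]

section Algebra

variable {D : Type*} [Ring D] [Algebra K D] {θ : B →ₐ[K] D} {c : B →ₗ[K] B →ₗ[K] D}

theorem mul_apply_one_left (hc : IsHochschildTwoCocycle θ c) (a b : B) :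
    θ a * c 1 b = c a 1 * θ b := by
  have := hc a 1 b
  rwa [one_mul, mul_one, add_comm, add_right_inj] at this

theorem apply_one_mul (hc : IsHochschildTwoCocycle θ c) (a b : B) :
    c 1 (a * b) = c 1 a * θ b := by
  simpa using hc 1 a b

end Algebra

variable {X : Type*} [AddCommGroup X] [Module K X] [Module B X] [IsScalarTower K B X]
  {c : B →ₗ[K] B →ₗ[K] Module.End K X}

theorem lift_mul (hc : IsHochschildTwoCocycle (Algebra.lsmul K K X) c) (a b : B) (t : B ⊗[K] X) :
    a • TensorProduct.lift (c b) t + TensorProduct.lift (c a) (b • t) =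
      TensorProduct.lift (c (a * b)) t + c a b (inducedAction K B X t) := by
  induction t with
  | zero => simp
  | tmul b' x => simpa [TensorProduct.smul_tmul'] using LinearMap.congr_fun (hc a b b') x
  | add t t' ht ht' => simpa [add_add_add_comm] using congrArg₂ (· + ·) ht ht'

/-- The crossed homomorphism on the syzygy of `X` attached to a 2-cocycle with values in `End X`:
on the kernel of the action map the last term of `lift_mul` vanishes. -/
def syzygyCrossedHom (hc : IsHochschildTwoCocycle (Algebra.lsmul K K X) c) :
    CrossedHom K B (LinearMap.ker (inducedAction K B X)) X where
  toLinearMap := (TensorProduct.uncurry (.id K) B X X ∘ₗ c).compl₂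
    ((LinearMap.ker (inducedAction K B X)).subtype.restrictScalars K)
  leibniz a b z := by
    have := hc.lift_mul a b z
    rw [LinearMap.mem_ker.mp z.2, map_zero, add_zero] at this
    exact this.symm

theorem syzygyCrossedHom_apply_retraction
    (hc : IsHochschildTwoCocycle (Algebra.lsmul K K X) c) (a b : B) (x : X) :
    hc.syzygyCrossedHom.toLinearMap a (syzygyRetraction K B X (b ⊗ₜ x)) =
      c a b x - c a 1 (b • x) := by
  change TensorProduct.lift (c a) (syzygyRetraction K B X (b ⊗ₜ x) : B ⊗[K] X) = _
  simp

end IsHochschildTwoCocycle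

theorem ExtTwoVanishes.hochschildTwoVanishes_lsmul {B X : Type u} [Ring B] [Algebra K B]
    [AddCommGroup X] [Module K X] [Module B X] [IsScalarTower K B X] [Module.Projective K X]
    (H : ExtTwoVanishes B X X) :
    HochschildTwoVanishes (Algebra.lsmul K K X : B →ₐ[K] Module.End K X) := by
  intro c hc
  obtain ⟨k, hk⟩ := (H (LinearMap.ker (inducedAction K B X)) (B ⊗[K] X) _ _ _ _ inferInstance
    (LinearMap.ker (inducedAction K B X)).subtype (inducedAction K B X)
    (Submodule.injective_subtype _) inducedAction_surjective
    (LinearMap.exact_subtype_ker_map _)).exists_inner hc.syzygyCrossedHom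
  -- The summand `c 1` accounts for cocycles that are not normalised.
  refine ⟨TensorProduct.curry (k ∘ₗ syzygyRetraction K B X) + c 1, fun a b ↦ ?_⟩
  ext x
  have hr : syzygyRetraction K B X ((a * b) ⊗ₜ x) =
      a • syzygyRetraction K B X (b ⊗ₜ x) + syzygyRetraction K B X (a ⊗ₜ (b • x)) := by
    simpa [TensorProduct.smul_tmul'] using syzygyRetraction_smul a (b ⊗ₜ[K] x)
  have hγ := hk a (syzygyRetraction K B X (b ⊗ₜ x))
  rw [hc.syzygyCrossedHom_apply_retraction] at hγ
  have h₁ : a • c 1 b x = c a 1 (b • x) := LinearMap.congr_fun (hc.mul_apply_one_left a b) x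
  have h₂ : c 1 (a * b) x = c 1 a (b • x) := LinearMap.congr_fun (hc.apply_one_mul a b) x
  simp only [sub_eq_iff_eq_add.mp hγ, h₁, h₂, hr, map_add, LinearMap.add_apply,
    LinearMap.sub_apply, LinearMap.comp_apply, Module.End.mul_apply, TensorProduct.curry_apply,
    Algebra.lsmul_coe]
  abel

theorem ExtTwoVanishes.hochschildTwoVanishes_matrix {B X : Type u} [Ring B] [Algebra K B]
    {m : Type*} [Fintype m] [DecidableEq m] (θ : B →ₐ[K] Matrix m m K)
    [AddCommGroup X] [Module B X] (ξ : X ≃+ (m → K))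
    (hX : ∀ (b : B) (x : X), ξ (b • x) = (θ b).mulVec (ξ x)) (H : ExtTwoVanishes B X X) :
    HochschildTwoVanishes θ := by
  let : Module K X := Module.compHom X (algebraMap K B)
  have : IsScalarTower K B X := .of_algebraMap_smul fun _ _ ↦ rfl
  let ξₗ : X ≃ₗ[K] (m → K) := ξ.toLinearEquiv fun r x ↦ by
    change ξ (algebraMap K B r • x) = r • ξ x
    rw [hX, AlgHom.commutes, Algebra.algebraMap_eq_smul_one, Matrix.smul_mulVec, Matrix.one_mulVec]
  have : Module.Projective K X := .of_equiv ξₗ.symm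
  let e : Matrix m m K ≃ₐ[K] Module.End K X := Matrix.toLinAlgEquiv'.trans (ξₗ.symm.conjAlgEquiv K)
  have he : e.toAlgHom.comp θ = Algebra.lsmul K K X := by
    ext b x
    change ξ.symm ((θ b).mulVec (ξ x)) = b • x
    rw [← hX, ξ.symm_apply_apply]
  exact .of_algEquiv e (he ▸ H.hochschildTwoVanishes_lsmul)

end ExtToHochschild

section SquareZeroExtension

variable {K : Type*} [CommRing K] {A C D : Type*} [Ring A] [Algebra K A] [Ring C] [Algebra K C]
  [Ring D] [Algebra K D]

/-- The algebra `A` is, through `f`, an extension of `C` by the square-zero ideal `t(D)`, on which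
it acts on both sides through `p : C → D`. -/
structure IsSquareZeroExtension (t : D →ₗ[K] A) (f : A →ₐ[K] C) (p : C →ₐ[K] D) : Prop where
  injective : Function.Injective t
  isExact : Function.Exact t f
  surjective : Function.Surjective f
  mul_left : ∀ a x, a * t x = t (p (f a) * x)
  mul_right : ∀ a x, t x * a = t (x * p (f a))

namespace IsSquareZeroExtension

variable {t : D →ₗ[K] A} {f : A →ₐ[K] C} {p : C →ₐ[K] D}

theorem mul_eq_zero (E : IsSquareZeroExtension t f p) (x y : D) : t x * t y = 0 := by
  rw [E.mul_left, E.isExact.apply_apply_eq_zero, map_zero, zero_mul, map_zero]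

theorem mapMatrix (E : IsSquareZeroExtension t f p) (m : Type*) [Fintype m] [DecidableEq m] :
    IsSquareZeroExtension (t.mapMatrix (m := m) (n := m)) f.mapMatrix (p.mapMatrix (m := m)) where
  injective := Matrix.map_injective E.injective
  isExact M := by
    refine ⟨fun h ↦ ?_, ?_⟩
    · choose N hN using fun i j ↦ (E.isExact (M i j)).mp (congrFun₂ h i j)
      exact ⟨N, Matrix.ext hN⟩
    · rintro ⟨N, rfl⟩
      exact Matrix.ext fun i j ↦ E.isExact.apply_apply_eq_zero (N i j)
  surjective M := by
    choose N hN using fun i j ↦ E.surjective (M i j)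
    exact ⟨N, Matrix.ext hN⟩
  mul_left M N := by
    ext i j
    simp [Matrix.mul_apply, E.mul_left]
  mul_right M N := by
    ext i j
    simp [Matrix.mul_apply, E.mul_right]

variable {B : Type*} [Ring B] [Algebra K B] {φ : B →ₐ[K] C}

theorem exists_cocycle (E : IsSquareZeroExtension t f p) {σ : B →ₗ[K] A}
    (hσ : ∀ b, f (σ b) = φ b) :
    ∃ c : B →ₗ[K] B →ₗ[K] D, IsHochschildTwoCocycle (p.comp φ) c ∧
      ∀ a b, t (c a b) = σ a * σ b - σ (a * b) := by
  choose c hc using fun a b ↦ (E.isExact (σ a * σ b - σ (a * b))).mp (by simp [hσ])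
  refine ⟨LinearMap.mk₂ K c ?_ ?_ ?_ ?_, fun a b b' ↦ E.injective ?_, hc⟩
  · exact fun a a' b ↦ E.injective (by simp only [map_add, hc, add_mul]; abel)
  · exact fun r a b ↦ E.injective (by simp only [map_smul, hc, smul_mul_assoc, smul_sub])
  · exact fun a b b' ↦ E.injective (by simp only [map_add, hc, mul_add]; abel)
  · exact fun r a b ↦ E.injective (by simp only [map_smul, hc, mul_smul_comm, smul_sub])
  · simp only [LinearMap.mk₂_apply, AlgHom.comp_apply, map_add, ← hσ, ← E.mul_left, ← E.mul_right,
      hc, mul_assoc]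
    noncomm_ring

theorem map_one_of_map_mul (E : IsSquareZeroExtension t f p) {ψ : B →ₗ[K] A}
    (hψ : ∀ b, f (ψ b) = φ b) (hmul : ∀ a b, ψ (a * b) = ψ a * ψ b) : ψ 1 = 1 := by
  obtain ⟨x, hx⟩ := (E.isExact (1 - ψ 1)).mp (by simp [hψ])
  have hidem : IsIdempotentElem (1 - ψ 1) :=
    IsIdempotentElem.one_sub (by rw [IsIdempotentElem, ← hmul, one_mul])
  have hzero : 1 - ψ 1 = 0 := by rw [← hidem.eq, ← hx, E.mul_eq_zero]
  exact (sub_eq_zero.mp hzero).symm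

theorem exists_lift [Module.Projective K B] (E : IsSquareZeroExtension t f p)
    (H : HochschildTwoVanishes (p.comp φ)) : ∃ ψ : B →ₐ[K] A, f.comp ψ = φ := by
  obtain ⟨σ, hσφ⟩ :=
    Module.projective_lifting_property f.toLinearMap φ.toLinearMap E.surjective
  have hσ (b : B) : f (σ b) = φ b := LinearMap.congr_fun hσφ b
  obtain ⟨c, hc, htc⟩ := E.exists_cocycle hσ
  obtain ⟨h, hh⟩ := H c hc
  let ψ : B →ₗ[K] A := σ - t ∘ₗ h
  have hψ (b : B) : f (ψ b) = φ b := by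
    simp [ψ, hσ, E.isExact.apply_apply_eq_zero]
  have hmul (a b : B) : ψ (a * b) = ψ a * ψ b := by
    have hdefect : σ a * σ b - σ (a * b) = σ a * t (h b) - t (h (a * b)) + t (h a) * σ b := by
      rw [← htc, hh, map_add, map_sub, E.mul_left, E.mul_right, hσ, hσ]
      rfl
    calc ψ (a * b) = σ a * σ b - (σ a * σ b - σ (a * b)) - t (h (a * b)) := by simp [ψ]
      _ = (σ a - t (h a)) * (σ b - t (h b)) := by
        rw [hdefect, sub_mul, mul_sub, mul_sub, E.mul_eq_zero]
        abel
  exact ⟨.ofLinearMap ψ (E.map_one_of_map_mul hψ hmul) hmul, AlgHom.ext hψ⟩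

end IsSquareZeroExtension

end SquareZeroExtension

section LocalAlgebra

theorem exists_mem_ne_zero_forall_mem_maximalIdeal_mul_eq_zero {R : Type*} [CommRing R]
    [IsLocalRing R] [IsArtinianRing R] {J : Ideal R} (hJ : J ≠ ⊥) :
    ∃ x ∈ J, x ≠ 0 ∧ ∀ r ∈ IsLocalRing.maximalIdeal R, r * x = 0 := by
  have : Nontrivial J := Submodule.nontrivial_iff_ne_bot.mpr hJ
  obtain ⟨P, hP⟩ := associatedPrimes.nonempty R J
  obtain ⟨hprime, x, hx⟩ := isAssociatedPrime_iff.mp hP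
  have hmem (r : R) : r ∈ P ↔ r * (x : R) = 0 := by
    rw [hx, Submodule.mem_colon_singleton, Submodule.mem_bot, Subtype.ext_iff]
    rfl
  refine ⟨x, x.2, fun h ↦ hprime.ne_top ?_, fun r hr ↦ ?_⟩
  · exact (Ideal.eq_top_iff_one P).mpr ((hmem 1).mpr (by rw [h, mul_zero]))
  · rwa [← hmem, IsLocalRing.eq_maximalIdeal hprime.isMaximal']

variable {K : Type*} [Field K] {R : Type*} [CommRing R] [Algebra K R]

theorem exists_mem_ne_zero_forall_mul_eq_smul [IsLocalRing R] [IsArtinianRing R]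
    (ρ : R →ₐ[K] K) {J : Ideal R} (hJ : J ≠ ⊥) :
    ∃ x ∈ J, x ≠ 0 ∧ ∀ r, r * x = ρ r • x := by
  obtain ⟨x, hxJ, hx0, hx⟩ := exists_mem_ne_zero_forall_mem_maximalIdeal_mul_eq_zero hJ
  refine ⟨x, hxJ, hx0, fun r ↦ ?_⟩
  have hr : r - algebraMap K R (ρ r) ∈ IsLocalRing.maximalIdeal R := fun hu ↦ by
    simpa using hu.map ρ
  rw [Algebra.smul_def, ← sub_eq_zero, ← sub_mul, hx _ hr]

theorem isSquareZeroExtension_span_singleton {x : R} (hx0 : x ≠ 0)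
    (ρ : R ⧸ Ideal.span {x} →ₐ[K] K)
    (hx : ∀ r, r * x = ρ (Ideal.Quotient.mk _ r) • x) :
    IsSquareZeroExtension (LinearMap.toSpanSingleton K R x)
      (Ideal.Quotient.mkₐ K (Ideal.span {x})) ρ where
  injective := smul_left_injective K hx0
  isExact r := by
    rw [Ideal.Quotient.mkₐ_eq_mk, Ideal.Quotient.eq_zero_iff_mem, Ideal.mem_span_singleton']
    refine ⟨fun ⟨a, ha⟩ ↦ ⟨_, (hx a).symm.trans ha⟩, fun ⟨l, hl⟩ ↦ ⟨algebraMap K R l, ?_⟩⟩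
    rw [← hl, LinearMap.toSpanSingleton_apply, Algebra.smul_def]
  surjective := Ideal.Quotient.mkₐ_surjective K _
  mul_left a l := by
    simp [hx, smul_smul, mul_comm]
  mul_right a l := by
    simp [mul_comm _ a, hx, smul_smul]

theorem finrank_quotient_lt_of_ne_bot [FiniteDimensional K R] {J : Ideal R} (hJ : J ≠ ⊥) :
    Module.finrank K (R ⧸ J) < Module.finrank K R := by
  have : Nontrivial (J.restrictScalars K) := Submodule.nontrivial_iff_ne_bot.mpr <|
    (Submodule.restrictScalars_eq_bot_iff ..).not.mpr hJ
  rw [← (J.restrictScalars K).finrank_quotient_add_finrank]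
  exact Nat.lt_add_of_pos_right Module.finrank_pos

theorem HochschildTwoVanishes.exists_matrix_lift {B : Type*} [Ring B] [Algebra K B] {m : Type*}
    [Fintype m] [DecidableEq m] {S : Type*} [CommRing S] [Algebra K S] {ρ : S →ₐ[K] K}
    {φ : B →ₐ[K] Matrix m m S} (H : HochschildTwoVanishes (ρ.mapMatrix.comp φ))
    [IsLocalRing R] [FiniteDimensional K R] (f : R →ₐ[K] S) (hf : Function.Surjective f) :
    ∃ ψ : B →ₐ[K] Matrix m m R, f.mapMatrix.comp ψ = φ := by
  induction hn : Module.finrank K R using Nat.strong_induction_on generalizing R with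
  | _ n ih =>
  have : IsArtinianRing R := .of_finite K R
  by_cases hker : RingHom.ker f = ⊥
  · let e := AlgEquiv.ofBijective f ⟨(RingHom.injective_iff_ker_eq_bot f).mpr hker, hf⟩
    exact ⟨e.symm.toAlgHom.mapMatrix.comp φ, AlgHom.ext fun b ↦ Matrix.ext fun i j ↦
      e.apply_symm_apply (φ b i j)⟩
  obtain ⟨x, hxf, hx0, hx⟩ := exists_mem_ne_zero_forall_mul_eq_smul (ρ.comp f) hker
  have hspan : Ideal.span {x} ≠ ⊥ := mt Ideal.span_singleton_eq_bot.mp hx0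
  let f' : R ⧸ Ideal.span {x} →ₐ[K] S := Ideal.Quotient.liftₐ _ f fun a ha ↦
    (Ideal.span_singleton_le_iff_mem _).mpr hxf ha
  have hf' : Function.Surjective f' := Ideal.Quotient.lift_surjective_of_surjective _ _ hf
  have : Nontrivial (R ⧸ Ideal.span {x}) := (ρ.comp f').toRingHom.domain_nontrivial
  have : IsLocalRing (R ⧸ Ideal.span {x}) :=
    .of_surjective' (Ideal.Quotient.mk _) Ideal.Quotient.mk_surjective
  obtain ⟨φ', rfl⟩ := ih _ (hn ▸ finrank_quotient_lt_of_ne_bot hspan) f' hf' rfl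
  obtain ⟨ψ, rfl⟩ :=
    ((isSquareZeroExtension_span_singleton hx0 (ρ.comp f') hx).mapMatrix m).exists_lift H
  exact ⟨ψ, rfl⟩

end LocalAlgebra

section Idempotents

theorem exists_unit_conj_of_completeOrthogonalIdempotents {A C ι : Type*} [Ring A] [Ring C]
    [Fintype ι] (f : A →+* C) [IsLocalHom f] {p q : ι → A} (hp : CompleteOrthogonalIdempotents p)
    (hq : CompleteOrthogonalIdempotents q) (hpq : ∀ i, f (p i) = f (q i)) :
    ∃ u : Aˣ, f u = 1 ∧ ∀ i, u * q i = p i * u := by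
  classical
  let v : A := ∑ i, p i * q i
  have hv : f v = 1 := by
    calc f v = ∑ i, f (q i) := by
          simp only [v, map_sum, map_mul, hpq, ← map_mul f (q _), (hq.idem _).eq]
      _ = 1 := by rw [← map_sum, hq.complete, map_one]
  have hconj (i : ι) : v * q i = p i * v := by
    simp [v, Finset.sum_mul, Finset.mul_sum, mul_assoc, hq.mul_eq, ← mul_assoc (p i), hp.mul_eq]
  obtain ⟨u, hu⟩ := isUnit_of_map_unit f v (hv ▸ isUnit_one)
  exact ⟨u, hu ▸ hv, hu ▸ hconj⟩

theorem isLocalHom_mapMatrix {R S m : Type*} [CommRing R] [CommRing S] [Fintype m] [DecidableEq m]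
    (f : R →+* S) [IsLocalHom f] : IsLocalHom (f.mapMatrix (m := m)) where
  map_nonunit M hM := by
    rw [Matrix.isUnit_iff_isUnit_det, ← RingHom.map_det] at hM
    exact (Matrix.isUnit_iff_isUnit_det M).mpr (isUnit_of_map_unit f _ hM)

theorem exists_lift_prescribed_idempotents {K B A C ι : Type*} [CommRing K] [Ring B] [Algebra K B]
    [Ring A] [Algebra K A] [Ring C] [Algebra K C] [Fintype ι] (f : A →ₐ[K] C)
    [IsLocalHom f.toRingHom] {e : ι → B} (he : CompleteOrthogonalIdempotents e)
    (ψ Θ : B →ₐ[K] A) (hΘ : ∀ i, f (Θ (e i)) = f (ψ (e i))) :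
    ∃ ψ' : B →ₐ[K] A, f.comp ψ' = f.comp ψ ∧ ∀ i, ψ' (e i) = Θ (e i) := by
  obtain ⟨u, hu, hconj⟩ : ∃ u : Aˣ, f u = 1 ∧ ∀ i, u * ψ (e i) = Θ (e i) * u :=
    exists_unit_conj_of_completeOrthogonalIdempotents f.toRingHom (he.map Θ.toRingHom)
      (he.map ψ.toRingHom) hΘ
  have hu_inv : f ↑u⁻¹ = 1 := calc
    f ↑u⁻¹ = f u * f ↑u⁻¹ := by rw [hu, one_mul]
    _ = 1 := by rw [← map_mul, u.mul_inv, map_one]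
  refine ⟨(MulSemiringAction.toAlgHom K A (ConjAct.toConjAct u)).comp ψ, ?_, fun i ↦ ?_⟩
  · ext b
    change f (u * ψ b * ↑u⁻¹) = f (ψ b)
    rw [map_mul, map_mul, hu, hu_inv, one_mul, mul_one]
  · exact (Units.mul_inv_eq_iff_eq_mul u).mpr (hconj i)

end Idempotents

theorem smooth_point_of_ext2_vanishing_general
    {K : Type*} [Field K] {B : Type u} [Ring B] [Algebra K B]
    {ι m : Type*} [Fintype ι] [Fintype m] [DecidableEq m]
    {e : ι → B} (he : CompleteOrthogonalIdempotents e) (θ : B →ₐ[K] Matrix m m K)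
    {X : Type u} [AddCommGroup X] [Module B X] (ξ : X ≃+ (m → K))
    (hX : ∀ (b : B) (x : X), ξ (b • x) = (θ b).mulVec (ξ x)) (hext2 : ExtTwoVanishes B X X)
    {R S : Type*} [CommRing R] [Algebra K R] [IsLocalRing R] [FiniteDimensional K R]
    [CommRing S] [Algebra K S] (f : R →ₐ[K] S) (hf : Function.Surjective f)
    (φ : B →ₐ[K] Matrix m m S) (ρ : S →ₐ[K] K) (hφ : ∀ b, (φ b).map ρ = θ b)
    (hφe : ∀ i, φ (e i) = (θ (e i)).map (algebraMap K S)) :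
    ∃ ψ : B →ₐ[K] Matrix m m R,
      (∀ b, (ψ b).map f = φ b) ∧ ∀ i, ψ (e i) = (θ (e i)).map (algebraMap K R) := by
  obtain rfl : ρ.mapMatrix.comp φ = θ := AlgHom.ext hφ
  obtain ⟨ψ, rfl⟩ := (hext2.hochschildTwoVanishes_matrix _ ξ hX).exists_matrix_lift f hf
  have : Nontrivial S := ρ.toRingHom.domain_nontrivial
  have : IsLocalHom f.toRingHom := .of_surjective _ hf
  have : IsLocalHom (f.mapMatrix (m := m)).toRingHom := isLocalHom_mapMatrix f.toRingHom
  obtain ⟨ψ', hψ', hψ'e⟩ := exists_lift_prescribed_idempotents f.mapMatrix he ψ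
    ((Algebra.ofId K R).mapMatrix.comp (ρ.mapMatrix.comp (f.mapMatrix.comp ψ))) fun i ↦ by
      refine Eq.trans ?_ (hφe i).symm
      ext j k
      exact f.commutes _
  exact ⟨ψ', DFunLike.congr_fun hψ', hψ'e⟩

/-- Let `B` be a finitely generated algebra over an algebraically closed
field `K` with a complete set of orthogonal idempotents `e₁, …, eₙ`, and let
`θ : B → M_d(K)` be a `K`-point of the representation scheme (the idempotents `eᵢ` being
sent to the prescribed idempotents `θ(eᵢ)`), with corresponding `B`-module `X`.  If
`Ext²_B(X, X) = 0`, then `θ` is a smooth point of the representation scheme, formulated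
via the infinitesimal lifting criterion: every `K`-algebra map `B → M_d(R/I)` lying over
`θ` and compatible with the idempotents, for `R` a finite-dimensional commutative local
`K`-algebra and `I` a square-zero ideal, lifts to a `K`-algebra map `B → M_d(R)`
compatible with the idempotents. -/
theorem smooth_point_of_ext2_vanishing
    {K : Type u} [Field K] [IsAlgClosed K]
    {B : Type u} [Ring B] [Algebra K B] (hfg : Algebra.FiniteType K B)
    (n d : ℕ) (e : Fin n → B)
    (horth : ∀ i j, e i * e j = if i = j then e i else 0)
    (hsum : ∑ i, e i = 1)
    (θ : B →ₐ[K] Matrix (Fin d) (Fin d) K)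
    -- X is the B-module given by the representation θ
    (X : Type u) [AddCommGroup X] [Module B X]
    (ξ : X ≃+ (Fin d → K))
    (hX : ∀ (b : B) (x : X), ξ (b • x) = (θ b).mulVec (ξ x))
    -- Ext²_B(X, X) = 0, via dimension shifting: for every syzygy Z of X,
    -- every extension of Z by X splits
    (hext2 : ∀ (Z P : Type u) (_ : AddCommGroup Z) (_ : Module B Z)
      (_ : AddCommGroup P) (_ : Module B P), Module.Projective B P →
      ∀ (ι : Z →ₗ[B] P) (π : P →ₗ[B] X), Function.Injective ι →
        Function.Surjective π → Function.Exact ι π →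
      ∀ (E : Type u) (_ : AddCommGroup E) (_ : Module B E)
        (f : X →ₗ[B] E) (g : E →ₗ[B] Z), Function.Injective f →
        Function.Surjective g → Function.Exact f g →
        ∃ s : E →ₗ[B] X, s.comp f = LinearMap.id) :
    -- smoothness at θ: the infinitesimal lifting criterion for square-zero extensions
    ∀ (R : Type u) (_ : CommRing R) (_ : Algebra K R) (_ : IsLocalRing R)
      (_ : FiniteDimensional K R) (I : Ideal R), I ^ 2 = ⊥ →
      ∀ (φ : B →ₐ[K] Matrix (Fin d) (Fin d) (R ⧸ I)) (ρ : (R ⧸ I) →ₐ[K] K),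
        (∀ b, (φ b).map ρ = θ b) →
        (∀ i, φ (e i) = (θ (e i)).map (algebraMap K (R ⧸ I))) →
        ∃ ψ : B →ₐ[K] Matrix (Fin d) (Fin d) R,
          (∀ b, (ψ b).map (Ideal.Quotient.mk I) = φ b) ∧
          (∀ i, ψ (e i) = (θ (e i)).map (algebraMap K R)) := by
  intro R _ _ _ _ I _ φ ρ hφ hφe
  exact smooth_point_of_ext2_vanishing_general ⟨OrthogonalIdempotents.iff_mul_eq.mpr horth, hsum⟩
    θ ξ hX hext2 (Ideal.Quotient.mkₐ K I) (Ideal.Quotient.mkₐ_surjective K I) φ ρ hφ hφe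
end
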